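/- arXiv:2603.12765 — 5 statements merged into one kernel-verified Lean document; each statement's English description precedes it below -/
import Mathlib

section
/- (Local discrete Caccioppoli inequality.) Let 0<h<1/2, L>1, x₀ ∈ hℤ^d, let V : hℤ^d → ℝ, and let φ : hℤ^d → ℂ satisfy −Δ_h φ(x) + V(x)φ(x) = 0 for every x ∈ Q_{2L}(x₀)∩hℤ^d, with V bounded on Q_{2L}(x₀)∩hℤ^d. Then for each choice of sign, Σ_{j=1}^d ‖D_{j,h}^± φ‖²_{ℓ²(Q_L(x₀))} ≤ 2·(72/L² + sup_{x∈Q_{2L}(x₀)∩hℤ^d}|V(x)|)·‖φ‖²_{ℓ²(Q_{2L}(x₀))}. -/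
open scoped BigOperators
open MeasureTheory

noncomputable section

/-- The canonical basis vector `e j` of `ℤ^d`. -/
def latE (d : ℕ) (j : Fin d) : Fin d → ℤ := fun i => if i = j then 1 else 0

/-- The point `h•k ∈ hℤ^d ⊂ ℝ^d` associated with `k ∈ ℤ^d`. -/
def pt (d : ℕ) (h : ℝ) (k : Fin d → ℤ) : Fin d → ℝ := fun i => h * (k i : ℝ)

/-- Forward difference operator `D_{j,h}^+`. -/
def Dp (d : ℕ) (h : ℝ) (j : Fin d) (u : (Fin d → ℤ) → ℂ) (k : Fin d → ℤ) : ℂ :=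
  (u (k + latE d j) - u k) / (h : ℂ)

/-- Backward difference operator `D_{j,h}^-`. -/
def Dm (d : ℕ) (h : ℝ) (j : Fin d) (u : (Fin d → ℤ) → ℂ) (k : Fin d → ℤ) : ℂ :=
  (u k - u (k - latE d j)) / (h : ℂ)

/-- The discrete Laplacian `Δ_h` on `hℤ^d`. -/
def discLap (d : ℕ) (h : ℝ) (u : (Fin d → ℤ) → ℂ) (k : Fin d → ℤ) : ℂ :=
  ∑ j : Fin d, (u (k + latE d j) + u (k - latE d j) - 2 * u k) / ((h : ℂ)) ^ 2

/-- The averaging operator `M_j^-`. -/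
def Mminus (d : ℕ) (h : ℝ) (j : Fin d) (u : (Fin d → ℤ) → ℂ) (k : Fin d → ℤ) : ℂ :=
  (u (k - latE d j) + u k) / 2


lemma cac_T (n a : ℤ) (hn : 1 ≤ n) :
    (max 0 (n - |a + 1|)) ^ 2 + (max 0 (n - |a - 1|)) ^ 2 ≤ 2 * (max 0 (n - |a|)) ^ 2 + 2 := by
  rcases lt_trichotomy a 0 with h | h | h
  · rw [abs_of_neg h, abs_of_neg (by omega : a - 1 < 0), abs_of_nonpos (by omega : a + 1 ≤ 0)]
    rcases lt_trichotomy (n + a) 0 with h2 | h2 | h2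
    · rw [max_eq_left (by omega), max_eq_left (by omega), max_eq_left (by omega)]; norm_num
    · rw [max_eq_right (by omega), max_eq_left (by omega), max_eq_left (by omega)]
      have : n - -(a + 1) = 1 := by omega
      rw [this]; norm_num
    · rw [max_eq_right (by omega), max_eq_right (by omega), max_eq_right (by omega)]; nlinarith
  · subst h
    have : max 0 (n - 1) = n - 1 := max_eq_right (by omega)
    have h2 : max 0 n = n := max_eq_right (by omega)
    simp [this, h2]; nlinarith
  · rw [abs_of_pos h, abs_of_pos (by omega : 0 < a + 1), abs_of_nonneg (by omega : 0 ≤ a - 1)]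
    rcases lt_trichotomy (n - a) 0 with h2 | h2 | h2
    · rw [max_eq_left (by omega), max_eq_left (by omega), max_eq_left (by omega)]; norm_num
    · rw [max_eq_left (by omega), max_eq_right (by omega), max_eq_left (by omega)]
      have : n - (a - 1) = 1 := by omega
      rw [this]; norm_num
    · rw [max_eq_right (by omega), max_eq_right (by omega), max_eq_right (by omega)]; nlinarith

/-- one-dimensional cutoff -/
def cacG (n q : ℤ) (a : ℤ) : ℝ := min 1 ((((max 0 (n - |a|)) ^ 2 : ℤ) : ℝ) / (q : ℝ) ^ 2)

lemma cacG_nonneg (n q a : ℤ) : 0 ≤ cacG n q a := by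
  unfold cacG; push_cast; positivity

lemma cacG_le_one (n q a : ℤ) : cacG n q a ≤ 1 := min_le_left _ _

lemma cacG_zero (n q a : ℤ) (h : n ≤ |a|) : cacG n q a = 0 := by
  unfold cacG; rw [max_eq_left (by omega)]; simp

lemma cacG_one (n q a : ℤ) (hq : 1 ≤ q) (h : |a| ≤ n - q) : cacG n q a = 1 := by
  unfold cacG
  have hq' : (1:ℝ) ≤ q := by exact_mod_cast hq
  rw [min_eq_left]
  rw [one_le_div (by positivity), max_eq_right (by omega)]
  have : q ^ 2 ≤ (n - |a|) ^ 2 := by nlinarith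
  exact_mod_cast this

lemma cacG_lap (n q a : ℤ) (hn : 1 ≤ n) (hq : 1 ≤ q) :
    cacG n q (a + 1) + cacG n q (a - 1) - 2 * cacG n q a ≤ 2 / (q : ℝ) ^ 2 := by
  have hq' : (1:ℝ) ≤ q := by exact_mod_cast hq
  have hpos : (0:ℝ) ≤ 2 / (q:ℝ)^2 := by positivity
  by_cases h : (1:ℝ) ≤ ((((max 0 (n - |a|)) ^ 2 : ℤ) : ℝ) / (q : ℝ) ^ 2)
  · have h1 : cacG n q a = 1 := min_eq_left h
    have := cacG_le_one n q (a+1)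
    have := cacG_le_one n q (a-1)
    linarith
  · have h1 : cacG n q a = ((((max 0 (n - |a|)) ^ 2 : ℤ) : ℝ) / (q : ℝ) ^ 2) :=
      min_eq_right (le_of_lt (not_le.mp h))
    have h2 : cacG n q (a+1) ≤ _ := min_le_right _ _
    have h3 : cacG n q (a-1) ≤ _ := min_le_right _ _
    have h4 : ((((max 0 (n - |a + 1|)) ^ 2 : ℤ) : ℝ)) + (((max 0 (n - |a - 1|)) ^ 2 : ℤ) : ℝ)
        ≤ 2 * (((max 0 (n - |a|)) ^ 2 : ℤ) : ℝ) + 2 := by exact_mod_cast cac_T n a hn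
    have h5 := div_le_div_of_nonneg_right h4 (by positivity : (0:ℝ) ≤ (q:ℝ)^2)
    rw [add_div, add_div, mul_div_assoc] at h5
    rw [h1]; linarith

/-- multi-dimensional cutoff -/
def cacPsi (d : ℕ) (n q : ℤ) (k₀ k : Fin d → ℤ) : ℝ := ⨅ i, cacG n q (k i - k₀ i)

lemma cacPsi_le {d : ℕ} (n q : ℤ) (k₀ k : Fin d → ℤ) (i : Fin d) :
    cacPsi d n q k₀ k ≤ cacG n q (k i - k₀ i) :=
  ciInf_le (Set.finite_range _).bddBelow i

lemma cacPsi_nonneg {d : ℕ} (n q : ℤ) (k₀ k : Fin d → ℤ) : 0 ≤ cacPsi d n q k₀ k :=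
  Real.iInf_nonneg fun _ => cacG_nonneg _ _ _

lemma cacPsi_zero {d : ℕ} (n q : ℤ) (k₀ k : Fin d → ℤ) (i : Fin d) (h : n ≤ |k i - k₀ i|) :
    cacPsi d n q k₀ k = 0 :=
  le_antisymm ((cacPsi_le n q k₀ k i).trans_eq (cacG_zero _ _ _ h)) (cacPsi_nonneg _ _ _ _)

lemma cacPsi_lap {d : ℕ} [Nonempty (Fin d)] (n q : ℤ) (hn : 1 ≤ n) (hq : 1 ≤ q)
    (k₀ k : Fin d → ℤ) :
    ∑ j, (cacPsi d n q k₀ (k + latE d j) + cacPsi d n q k₀ (k - latE d j)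
      - 2 * cacPsi d n q k₀ k) ≤ 2 / (q : ℝ) ^ 2 := by
  obtain ⟨i, hi⟩ := exists_eq_ciInf_of_finite (f := fun i => cacG n q (k i - k₀ i))
  change cacG n q (k i - k₀ i) = cacPsi d n q k₀ k at hi
  rw [← Finset.add_sum_erase _ _ (Finset.mem_univ i)]
  have h1 : ∑ j ∈ Finset.univ.erase i, (cacPsi d n q k₀ (k + latE d j)
      + cacPsi d n q k₀ (k - latE d j) - 2 * cacPsi d n q k₀ k) ≤ 0 := by
    apply Finset.sum_nonpos
    intro j hj
    have hij : i ≠ j := (Finset.ne_of_mem_erase hj).symm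
    have a1 := cacPsi_le n q k₀ (k + latE d j) i
    have a2 := cacPsi_le n q k₀ (k - latE d j) i
    simp [latE, hij] at a1 a2
    linarith
  have a1 := cacPsi_le n q k₀ (k + latE d i) i
  have a2 := cacPsi_le n q k₀ (k - latE d i) i
  have a3 := cacG_lap n q (k i - k₀ i) hn hq
  simp only [latE, Pi.add_apply, Pi.sub_apply, if_true] at a1 a2
  rw [show k i + 1 - k₀ i = k i - k₀ i + 1 by ring] at a1
  rw [show k i - 1 - k₀ i = k i - k₀ i - 1 by ring] at a2
  linarith

lemma cac_box_finite {d : ℕ} (n : ℤ) (k₀ : Fin d → ℤ) :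
    {k : Fin d → ℤ | ∀ i, |k i - k₀ i| ≤ n}.Finite := by
  apply (Set.finite_Icc (fun i => k₀ i - n) (fun i => k₀ i + n)).subset
  intro k hk
  refine ⟨fun i => ?_, fun i => ?_⟩ <;> have := abs_le.mp (hk i) <;> simp <;> omega

lemma cac_parts {α : Type*} [AddCommGroup α] (ψ F : α → ℝ) (e : α) (hψ : ψ.support.Finite) :
    ∑' k, ψ k * (F (k + e) + F (k - e) - 2 * F k)
      = ∑' k, (ψ (k + e) + ψ (k - e) - 2 * ψ k) * F k := by
  have s : ∀ f : α → ℝ, Summable fun k => ψ k * f k := fun f =>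
    summable_of_finite_support (hψ.subset fun k hk => by
      simp only [Function.mem_support] at hk ⊢; exact left_ne_zero_of_mul hk)
  have e1 : ∑' k, ψ k * F (k + e) = ∑' k, ψ (k - e) * F k := by
    rw [← (Equiv.addRight e).tsum_eq fun k => ψ (k - e) * F k]; simp
  have e2 : ∑' k, ψ k * F (k - e) = ∑' k, ψ (k + e) * F k := by
    rw [← (Equiv.subRight e).tsum_eq fun k => ψ (k + e) * F k]; simp
  have s1 : Summable fun k => ψ (k - e) * F k := by
    rw [← (Equiv.addRight e).summable_iff]
    simpa [Function.comp_def] using s fun k => F (k + e)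
  have s2 : Summable fun k => ψ (k + e) * F k := by
    rw [← (Equiv.subRight e).summable_iff]
    simpa [Function.comp_def] using s fun k => F (k - e)
  simp only [mul_sub, mul_add, sub_mul, add_mul]
  rw [((s _).add (s _)).tsum_sub (s _), (s _).tsum_add (s _)]
  have s3 : Summable fun k => 2 * ψ k * F k := by
    simpa [mul_comm, mul_left_comm, mul_assoc] using s fun k => 2 * F k
  rw [(s2.add s1).tsum_sub s3, s2.tsum_add s1, e1, e2]
  have : (fun k => ψ k * (2 * F k)) = fun k => 2 * ψ k * F k := by ext; ring
  rw [this]; ring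

lemma cac_pt (a b c : ℂ) :
    ‖a‖ ^ 2 + ‖b‖ ^ 2 - 2 * ‖c‖ ^ 2 = ‖a - c‖ ^ 2 + ‖c - b‖ ^ 2
      + 2 * ((a + b - 2 * c) * (starRingEnd ℂ) c).re := by
  simp only [← Complex.normSq_eq_norm_sq, Complex.normSq_apply, Complex.mul_re, Complex.mul_im,
    Complex.sub_re, Complex.sub_im, Complex.add_re, Complex.add_im, Complex.conj_re,
    Complex.conj_im]
  norm_num
  ring

lemma cac_main (d : ℕ) [Nonempty (Fin d)] (h : ℝ) (hh0 : 0 < h) (n q : ℤ) (hn : 1 ≤ n)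
    (hq : 1 ≤ q) (k₀ : Fin d → ℤ) (V : (Fin d → ℤ) → ℝ) (φ : (Fin d → ℤ) → ℂ)
    (heq : ∀ k : Fin d → ℤ, (∀ i, |k i - k₀ i| ≤ n) →
      -discLap d h φ k + (V k : ℂ) * φ k = 0)
    (M : ℝ) (hM : ∀ k : Fin d → ℤ, (∀ i, |k i - k₀ i| ≤ n) → |V k| ≤ M) :
    h ^ 2 * ∑' k, cacPsi d n q k₀ k * (∑ j, (‖Dp d h j φ k‖ ^ 2 + ‖Dm d h j φ k‖ ^ 2))
      ≤ (2 / (q : ℝ) ^ 2 + 2 * h ^ 2 * M) *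
        ∑' k, Set.indicator {k : Fin d → ℤ | ∀ i, |k i - k₀ i| ≤ n} (fun k => ‖φ k‖ ^ 2) k := by
  set ψ := cacPsi d n q k₀ with hψdef
  set S := {k : Fin d → ℤ | ∀ i, |k i - k₀ i| ≤ n} with hS
  have hSf : S.Finite := cac_box_finite n k₀
  have hψ0 : ∀ k, 0 ≤ ψ k := fun k => cacPsi_nonneg _ _ _ _
  have hψ1 : ∀ k, ψ k ≤ 1 := fun k =>
    (cacPsi_le n q k₀ k (Classical.arbitrary _)).trans (cacG_le_one _ _ _)
  have hψS : ∀ k, k ∉ S → ψ k = 0 := by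
    intro k hk
    simp only [hS, Set.mem_setOf_eq, not_forall, not_le] at hk
    obtain ⟨i, hi⟩ := hk
    exact cacPsi_zero _ _ _ _ i hi.le
  have hsupp : ψ.support.Finite := hSf.subset fun k hk => by
    by_contra hc; exact hk (hψS k hc)
  have hb : ∀ k, k ∉ S → ∀ j, ψ (k + latE d j) = 0 ∧ ψ (k - latE d j) = 0 := by
    intro k hk j
    simp only [hS, Set.mem_setOf_eq, not_forall, not_le] at hk
    obtain ⟨i, hi⟩ := hk
    constructor <;> apply cacPsi_zero _ _ _ _ i <;> simp only [latE, Pi.add_apply, Pi.sub_apply] <;>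
      rw [lt_abs] at hi <;> rw [le_abs] <;> split_ifs <;> omega
  have s : ∀ f : (Fin d → ℤ) → ℝ, Summable fun k => ψ k * f k := fun f =>
    summable_of_finite_support (hsupp.subset fun k hk => by
      simp only [Function.mem_support] at hk ⊢; exact left_ne_zero_of_mul hk)
  have hhC : (h:ℂ) ≠ 0 := by exact_mod_cast hh0.ne'
  -- pointwise identity
  have key : ∀ k ∈ S, h ^ 2 * (∑ j, (‖Dp d h j φ k‖ ^ 2 + ‖Dm d h j φ k‖ ^ 2))
      = ∑ j, (‖φ (k + latE d j)‖ ^ 2 + ‖φ (k - latE d j)‖ ^ 2 - 2 * ‖φ k‖ ^ 2)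
        - 2 * h ^ 2 * V k * ‖φ k‖ ^ 2 := by
    intro k hk
    have e := heq k hk
    have e1 : ∑ j, (φ (k + latE d j) + φ (k - latE d j) - 2 * φ k) = (h:ℂ) ^ 2 * (V k * φ k) := by
      unfold discLap at e
      rw [← Finset.sum_div] at e
      field_simp at e
      linear_combination -e
    have e3 : ∀ j, h ^ 2 * (‖Dp d h j φ k‖ ^ 2 + ‖Dm d h j φ k‖ ^ 2) =
        ‖φ (k + latE d j) - φ k‖ ^ 2 + ‖φ k - φ (k - latE d j)‖ ^ 2 := by
      intro j
      simp only [Dp, Dm, norm_div, Complex.norm_real, div_pow, Real.norm_eq_abs, sq_abs]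
      field_simp
    rw [Finset.mul_sum]
    simp_rw [cac_pt, e3]
    rw [Finset.sum_add_distrib (g := fun j => 2 * _), ← Finset.mul_sum, ← Complex.re_sum, ← Finset.sum_mul, e1]
    have e2 : ((h:ℂ) ^ 2 * (V k * φ k) * (starRingEnd ℂ) (φ k)) =
        ((h ^ 2 * V k * ‖φ k‖ ^ 2 : ℝ) : ℂ) := by
      rw [mul_assoc, mul_assoc, Complex.mul_conj, Complex.normSq_eq_norm_sq]; push_cast; ring
    rw [e2, Complex.ofReal_re]
    ring
  have step1 : h ^ 2 * ∑' k, ψ k * (∑ j, (‖Dp d h j φ k‖ ^ 2 + ‖Dm d h j φ k‖ ^ 2))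
      = ∑' k, (ψ k * ∑ j, (‖φ (k + latE d j)‖ ^ 2 + ‖φ (k - latE d j)‖ ^ 2 - 2 * ‖φ k‖ ^ 2)
        - ψ k * (2 * h ^ 2 * V k * ‖φ k‖ ^ 2)) := by
    rw [← tsum_mul_left]
    congr 1; ext k
    by_cases hk : k ∈ S
    · rw [← mul_sub, ← key k hk]; ring
    · rw [hψS k hk]; ring
  have sI : ∀ f : (Fin d → ℤ) → ℝ, Summable (S.indicator f) := fun f =>
    summable_of_finite_support (hSf.subset Set.support_indicator_subset)
  have step2 : ∑' k, ψ k * ∑ j, (‖φ (k + latE d j)‖ ^ 2 + ‖φ (k - latE d j)‖ ^ 2 - 2 * ‖φ k‖ ^ 2)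
      ≤ 2 / (q : ℝ) ^ 2 * ∑' k, S.indicator (fun k => ‖φ k‖ ^ 2) k := by
    simp_rw [Finset.mul_sum]
    rw [Summable.tsum_finsetSum (fun j _ => s _)]
    have sj : ∀ j, Summable fun k => (ψ (k + latE d j) + ψ (k - latE d j) - 2 * ψ k) * ‖φ k‖ ^ 2 := by
      intro j
      apply summable_of_finite_support (hSf.subset _)
      intro k hk
      by_contra hc
      apply hk
      simp [hb k hc j, hψS k hc]
    have : ∀ j, ∑' k, ψ k * (‖φ (k + latE d j)‖ ^ 2 + ‖φ (k - latE d j)‖ ^ 2 - 2 * ‖φ k‖ ^ 2)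
        = ∑' k, (ψ (k + latE d j) + ψ (k - latE d j) - 2 * ψ k) * ‖φ k‖ ^ 2 := fun j =>
      cac_parts ψ (fun k => ‖φ k‖ ^ 2) (latE d j) hsupp
    simp_rw [this]
    rw [← Summable.tsum_finsetSum (fun j _ => sj j), ← tsum_mul_left]
    apply Summable.tsum_le_tsum _ (summable_sum fun j _ => sj j) ((sI _).mul_left _)
    intro k
    rw [← Finset.sum_mul]
    by_cases hk : k ∈ S
    · rw [Set.indicator_of_mem hk]
      exact mul_le_mul_of_nonneg_right (cacPsi_lap n q hn hq k₀ k) (by positivity)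
    · rw [Set.indicator_of_notMem hk]
      simp [hb k hk, hψS k hk]
  have step3 : -∑' k, ψ k * (2 * h ^ 2 * V k * ‖φ k‖ ^ 2) ≤
      2 * h ^ 2 * M * ∑' k, S.indicator (fun k => ‖φ k‖ ^ 2) k := by
    rw [← tsum_neg, ← tsum_mul_left]
    apply Summable.tsum_le_tsum _ (s _).neg ((sI _).mul_left _)
    intro k
    by_cases hk : k ∈ S
    · rw [Set.indicator_of_mem hk]
      have hv := abs_le.mp (hM k hk)
      have hM0 : 0 ≤ M := (abs_nonneg _).trans (hM k hk)
      have : ψ k * (-V k) ≤ M := by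
        have := mul_le_mul_of_nonneg_left (by linarith : -V k ≤ M) (hψ0 k)
        have := mul_le_mul_of_nonneg_right (hψ1 k) hM0
        linarith
      have := mul_le_mul_of_nonneg_left this (by positivity : 0 ≤ 2 * h ^ 2 * ‖φ k‖ ^ 2)
      linarith
    · rw [Set.indicator_of_notMem hk, hψS k hk]; simp
  rw [step1, (s _).tsum_sub (s _)]
  linarith

/-- Local discrete Caccioppoli inequality on cubes `Q_L(x₀) ⊂ Q_{2L}(x₀)`
for solutions of `−Δ_hφ + Vφ = 0` in `Q_{2L}(x₀)`, for both difference operators. -/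
theorem stmt_4 (d : ℕ) (h L : ℝ) (hh0 : 0 < h) (hh : h < 1 / 2) (hL : 1 < L)
    (k₀ : Fin d → ℤ) (V : (Fin d → ℤ) → ℝ) (φ : (Fin d → ℤ) → ℂ)
    (heq : ∀ k : Fin d → ℤ, (∀ i, |h * (k i : ℝ) - h * (k₀ i : ℝ)| ≤ L) →
      -discLap d h φ k + (V k : ℂ) * φ k = 0)
    (M : ℝ) (hM : ∀ k : Fin d → ℤ, (∀ i, |h * (k i : ℝ) - h * (k₀ i : ℝ)| ≤ L) → |V k| ≤ M) :
    ((∑ j : Fin d, ∑' k, Set.indicator {x : Fin d → ℝ | ∀ i, |x i - h * (k₀ i : ℝ)| ≤ L / 2}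
          (fun _ => ‖Dp d h j φ k‖ ^ 2) (pt d h k))
        ≤ 2 * (72 / L ^ 2 + M) *
          ∑' k, Set.indicator {x : Fin d → ℝ | ∀ i, |x i - h * (k₀ i : ℝ)| ≤ L}
            (fun _ => ‖φ k‖ ^ 2) (pt d h k)) ∧
    ((∑ j : Fin d, ∑' k, Set.indicator {x : Fin d → ℝ | ∀ i, |x i - h * (k₀ i : ℝ)| ≤ L / 2}
          (fun _ => ‖Dm d h j φ k‖ ^ 2) (pt d h k))
        ≤ 2 * (72 / L ^ 2 + M) *
          ∑' k, Set.indicator {x : Fin d → ℝ | ∀ i, |x i - h * (k₀ i : ℝ)| ≤ L}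
            (fun _ => ‖φ k‖ ^ 2) (pt d h k)) := by
  have hk0 : |V k₀| ≤ M := hM k₀ fun i => by simp; linarith
  have hM0 : 0 ≤ M := (abs_nonneg _).trans hk0
  have hR0 : 0 ≤ ∑' k, Set.indicator {x : Fin d → ℝ | ∀ i, |x i - h * (k₀ i : ℝ)| ≤ L}
            (fun _ => ‖φ k‖ ^ 2) (pt d h k) :=
    tsum_nonneg fun k => Set.indicator_nonneg (fun _ _ => by positivity) _
  rcases Nat.eq_zero_or_pos d with rfl | hd
  · simp only [Finset.univ_eq_empty, Finset.sum_empty]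
    exact ⟨by positivity, by positivity⟩
  haveI : Nonempty (Fin d) := ⟨⟨0, hd⟩⟩
  have box : ∀ (R : ℝ) (k : Fin d → ℤ), (∀ i, |h * (k i : ℝ) - h * (k₀ i : ℝ)| ≤ R) ↔
      ∀ i, |k i - k₀ i| ≤ ⌊R / h⌋ := by
    intro R k
    refine forall_congr' fun i => ?_
    rw [Int.le_floor, le_div_iff₀ hh0, ← mul_sub, abs_mul, abs_of_pos hh0]
    push_cast
    rw [mul_comm]
  set n := ⌊L / h⌋ with hn
  set p := ⌊L / 2 / h⌋ with hp
  have hN : 2 < L / h := by rw [lt_div_iff₀ hh0]; linarith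
  have hhalf : L / 2 / h = L / h / 2 := by ring
  have hp1 : 1 ≤ p := by rw [hp, hhalf, Int.le_floor]; push_cast; linarith
  have hp2 : L / h / 2 < p + 1 := by rw [hp, hhalf]; exact Int.lt_floor_add_one _
  have hp3 : (p:ℝ) ≤ L / h / 2 := by rw [hp, hhalf]; exact Int.floor_le _
  have hnp : 2 * p ≤ n := by rw [hn, Int.le_floor]; push_cast; linarith
  have main := cac_main d h hh0 n (n - p) (by omega) (by omega) k₀ V φ
    (fun k hk => heq k ((box L k).2 hk)) M (fun k hk => hM k ((box L k).2 hk))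
  have hRe : (∑' k, Set.indicator {x : Fin d → ℝ | ∀ i, |x i - h * (k₀ i : ℝ)| ≤ L}
            (fun _ => ‖φ k‖ ^ 2) (pt d h k)) = ∑' k, Set.indicator
      {k : Fin d → ℤ | ∀ i, |k i - k₀ i| ≤ n} (fun k => ‖φ k‖ ^ 2) k := by
    congr 1; ext k
    simp only [Set.indicator_apply, Set.mem_setOf_eq, pt, box L k, ← hn]
  rw [← hRe] at main
  set R := ∑' k, Set.indicator {x : Fin d → ℝ | ∀ i, |x i - h * (k₀ i : ℝ)| ≤ L}
            (fun _ => ‖φ k‖ ^ 2) (pt d h k) with hR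
  set ψ := cacPsi d n (n - p) k₀ with hψ
  have hψone : ∀ k : Fin d → ℤ, (∀ i, |k i - k₀ i| ≤ p) → 1 ≤ ψ k := by
    intro k hk
    exact le_ciInf fun i => (cacG_one n (n - p) _ (by omega) (by have := hk i; omega)).ge
  have hψ0 : ∀ k, 0 ≤ ψ k := fun k => cacPsi_nonneg _ _ _ _
  have hsupp : ψ.support.Finite := (cac_box_finite n k₀).subset fun k hk => by
    intro i
    by_contra hc
    exact hk (cacPsi_zero _ _ _ _ i (not_le.mp hc).le)
  have hc : 2 / ((n - p : ℤ) : ℝ) ^ 2 ≤ h ^ 2 * (144 / L ^ 2) := by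
    have a1 : L / h < 4 * ((n - p : ℤ) : ℝ) := by
      have b1 : (p:ℝ) ≤ ((n - p : ℤ) : ℝ) := by exact_mod_cast (by omega : p ≤ n - p)
      have b2 : (1:ℝ) ≤ p := by exact_mod_cast hp1
      linarith
    have a2 : 0 < ((n - p : ℤ) : ℝ) := by linarith
    have a3 : L < 4 * ((n - p : ℤ) : ℝ) * h := by rwa [div_lt_iff₀ hh0] at a1
    have a4 : L ^ 2 ≤ (4 * ((n - p : ℤ) : ℝ) * h) ^ 2 := by gcongr
    rw [← mul_div_assoc, div_le_div_iff₀ (by positivity) (by positivity)]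
    have : 0 ≤ (((n - p : ℤ) : ℝ) * h) ^ 2 := by positivity
    linarith
  have main2 : ∑' k, ψ k * (∑ j, (‖Dp d h j φ k‖ ^ 2 + ‖Dm d h j φ k‖ ^ 2))
      ≤ 2 * (72 / L ^ 2 + M) * R := by
    have h1 := mul_le_mul_of_nonneg_right hc hR0
    have h2 : h ^ 2 * ∑' k, ψ k * (∑ j, (‖Dp d h j φ k‖ ^ 2 + ‖Dm d h j φ k‖ ^ 2)) ≤
        h ^ 2 * (2 * (72 / L ^ 2 + M) * R) := by
      refine main.trans ?_
      have : h ^ 2 * (2 * (72 / L ^ 2 + M) * R) =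
        h ^ 2 * (144 / L ^ 2) * R + 2 * h ^ 2 * M * R := by ring
      rw [this, add_mul]
      linarith
    exact le_of_mul_le_mul_left h2 (by positivity)
  have fin : ∀ f : Fin d → (Fin d → ℤ) → ℝ, (∀ j k, 0 ≤ f j k) →
      (∀ j k, f j k ≤ ‖Dp d h j φ k‖ ^ 2 + ‖Dm d h j φ k‖ ^ 2) →
      (∑ j : Fin d, ∑' k, Set.indicator {x : Fin d → ℝ | ∀ i, |x i - h * (k₀ i : ℝ)| ≤ L / 2}
          (fun _ => f j k) (pt d h k)) ≤ 2 * (72 / L ^ 2 + M) * R := by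
    intro f hf0 hf
    refine le_trans ?_ main2
    have hin : ∀ k : Fin d → ℤ, pt d h k ∈ {x : Fin d → ℝ | ∀ i, |x i - h * (k₀ i : ℝ)| ≤ L / 2} ↔
        ∀ i, |k i - k₀ i| ≤ p := fun k => box (L / 2) k
    have sj : ∀ j, Summable fun k => Set.indicator
        {x : Fin d → ℝ | ∀ i, |x i - h * (k₀ i : ℝ)| ≤ L / 2} (fun _ => f j k) (pt d h k) := by
      intro j
      apply summable_of_finite_support ((cac_box_finite p k₀).subset _)
      intro k hk
      exact (hin k).1 (Set.mem_of_indicator_ne_zero hk)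
    rw [← Summable.tsum_finsetSum fun j _ => sj j]
    apply Summable.tsum_le_tsum _ (summable_sum fun j _ => sj j)
    · exact summable_of_finite_support (hsupp.subset fun k hk => by
        simp only [Function.mem_support] at hk ⊢; exact left_ne_zero_of_mul hk)
    · intro k
      rw [Finset.mul_sum]
      apply Finset.sum_le_sum
      intro j _
      have hP : 0 ≤ ‖Dp d h j φ k‖ ^ 2 + ‖Dm d h j φ k‖ ^ 2 := by positivity
      by_cases hk : pt d h k ∈ {x : Fin d → ℝ | ∀ i, |x i - h * (k₀ i : ℝ)| ≤ L / 2}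
      · rw [Set.indicator_of_mem hk]
        have := hψone k ((hin k).1 hk)
        have := mul_le_mul_of_nonneg_right this hP
        have := hf j k
        linarith
      · rw [Set.indicator_of_notMem hk]
        exact mul_nonneg (hψ0 k) hP
  exact ⟨fin (fun j k => ‖Dp d h j φ k‖ ^ 2) (fun _ _ => by positivity)
      (fun _ _ => le_add_of_nonneg_right (by positivity)),
    fin (fun j k => ‖Dm d h j φ k‖ ^ 2) (fun _ _ => by positivity)
      (fun _ _ => le_add_of_nonneg_left (by positivity))⟩
end
end

section
/- (Two-sided ℓ² bound for the discrete heat kernel.) Let 0<T_−<T_+. Then there exist h₀>0 and κ>0, depending only on d, T_− and T_+, such that for every t with T_− ≤ t ≤ T_+, every 0<h<h₀ and every y ∈ hℤ^d, 1/κ ≤ ( Σ_{x∈hℤ^d} h^d·p_{d,h}(t,x,y)² )^{1/2} ≤ κ. -/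
open scoped BigOperators
open MeasureTheory

noncomputable section

/-- The discrete heat kernel on `hℤ^d` (at lattice points `hk`, `hm`):
`p_{d,h}(t,x,y) = (2π)^{−d} ∫_{[−π/h,π/h]^d} exp(−2t h^{−2} Σ_j (1−cos(hξ_j)))·e^{i(x−y)·ξ} dξ`
(the integral is real, so we take its real part). -/
def heatKer (d : ℕ) (h t : ℝ) (k m : Fin d → ℤ) : ℝ :=
  ((2 * Real.pi) ^ d)⁻¹ *
    (∫ ξ in Set.Icc (fun _ : Fin d => -(Real.pi / h)) (fun _ => Real.pi / h),
      Complex.exp (((-(2 * t / h ^ 2) * ∑ j, (1 - Real.cos (h * ξ j)) : ℝ) : ℂ)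
        + Complex.I * ((∑ j, (h * (k j : ℝ) - h * (m j : ℝ)) * ξ j : ℝ) : ℂ))).re

/-- The one-dimensional unscaled kernel
`𝔭₁(τ,u) = (2π)^{−1} ∫_{−π}^{π} e^{−2τ(1−cos η)} e^{iuη} dη`. -/
def p1ker (τ : ℝ) (u : ℤ) : ℝ :=
  (2 * Real.pi)⁻¹ *
    (∫ η in (-Real.pi)..Real.pi,
      Complex.exp (((-(2 * τ) * (1 - Real.cos η) : ℝ) : ℂ)
        + Complex.I * (u : ℂ) * (η : ℂ))).re

def gOne (h t : ℝ) (n : ℤ) : ℂ :=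
  ∫ ξ in (-(Real.pi / h))..(Real.pi / h),
    Complex.exp (((-(2 * t / h ^ 2) * (1 - Real.cos (h * ξ)) : ℝ) : ℂ)
      + Complex.I * ((h * (n : ℝ) * ξ : ℝ) : ℂ))

def sOne (h t : ℝ) : ℝ :=
  (2 * Real.pi)⁻¹ * ∫ ξ in (-(Real.pi / h))..(Real.pi / h),
    Real.exp (-(4 * t / h ^ 2) * (1 - Real.cos (h * ξ)))

lemma gOne_conj (h t : ℝ) (n : ℤ) : (starRingEnd ℂ) (gOne h t n) = gOne h t n := by
  have h1 : (starRingEnd ℂ) (gOne h t n) = ∫ ξ in (-(Real.pi / h))..(Real.pi / h),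
      (starRingEnd ℂ) (Complex.exp (((-(2 * t / h ^ 2) * (1 - Real.cos (h * ξ)) : ℝ) : ℂ)
      + Complex.I * ((h * (n : ℝ) * ξ : ℝ) : ℂ))) := by
    unfold gOne
    simp only [intervalIntegral, map_sub, integral_conj]
  rw [h1]
  have h2 := intervalIntegral.integral_comp_neg (a := -(Real.pi / h)) (b := Real.pi / h)
    (fun ξ : ℝ => Complex.exp (((-(2 * t / h ^ 2) * (1 - Real.cos (h * ξ)) : ℝ) : ℂ)
      + Complex.I * ((h * (n : ℝ) * ξ : ℝ) : ℂ)))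
  rw [neg_neg] at h2
  unfold gOne
  rw [← h2]
  congr 1
  ext ξ
  rw [← Complex.exp_conj]
  congr 1
  rw [map_add, map_mul, Complex.conj_ofReal, Complex.conj_ofReal, Complex.conj_I,
    mul_neg h ξ, Real.cos_neg]
  push_cast
  ring

lemma gOne_ofReal (h t : ℝ) (n : ℤ) : (((gOne h t n).re : ℝ) : ℂ) = gOne h t n :=
  Complex.conj_eq_iff_re.mp (gOne_conj h t n)

lemma gOne_norm (h t : ℝ) (n : ℤ) : ‖gOne h t n‖ ^ 2 = (gOne h t n).re ^ 2 := by
  rw [← gOne_ofReal, Complex.norm_real, Complex.ofReal_re, Real.norm_eq_abs, sq_abs]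

lemma heatKer_eq (d : ℕ) (h t : ℝ) (hh : 0 < h) (k m : Fin d → ℤ) :
    heatKer d h t k m = ∏ j, ((2 * Real.pi)⁻¹ * (gOne h t (k j - m j)).re) := by
  have hp : -(Real.pi / h) ≤ Real.pi / h := by
    have : 0 < Real.pi / h := div_pos Real.pi_pos hh
    linarith
  unfold heatKer
  rw [Finset.prod_mul_distrib, Finset.prod_const, Finset.card_univ, Fintype.card_fin, inv_pow]
  congr 1
  rw [← Complex.ofReal_re (∏ j, (gOne h t (k j - m j)).re)]
  congr 1
  rw [Complex.ofReal_prod]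
  simp only [gOne_ofReal]
  simp only [gOne, intervalIntegral.integral_of_le hp, ← integral_Icc_eq_integral_Ioc]
  rw [← integral_fintype_prod_eq_prod (fun (j : Fin d) (ξ : ℝ) =>
    Complex.exp (((-(2 * t / h ^ 2) * (1 - Real.cos (h * ξ)) : ℝ) : ℂ)
      + Complex.I * ((h * ((k j - m j : ℤ) : ℝ) * ξ : ℝ) : ℂ)))
    (μ := fun _ => volume.restrict (Set.Icc (-(Real.pi / h)) (Real.pi / h))),
    ← Measure.restrict_pi_pi, Set.pi_univ_Icc, ← volume_pi]
  congr 1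
  ext ξ
  rw [← Complex.exp_sum]
  congr 1
  rw [Finset.sum_add_distrib, ← Finset.mul_sum, ← Complex.ofReal_sum, ← Complex.ofReal_sum,
    ← Finset.mul_sum]
  congr 4
  ext j
  push_cast
  ring

lemma one_hasSum (h t : ℝ) (hh : 0 < h) :
    HasSum (fun n : ℤ => h * ((2 * Real.pi)⁻¹ * (gOne h t n).re) ^ 2) (sOne h t) := by
  have hp : -(Real.pi / h) < Real.pi / h := by
    have : 0 < Real.pi / h := div_pos Real.pi_pos hh
    linarith
  set f : ℝ → ℂ := fun ξ => Complex.exp (((-(2 * t / h ^ 2) * (1 - Real.cos (h * ξ)) : ℝ) : ℂ))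
    with hf
  have hfc : Continuous f := by fun_prop
  have hL : MemLp f 2 (volume.restrict (Set.Ioc (-(Real.pi / h)) (Real.pi / h))) := by
    obtain ⟨C, hC⟩ := (isCompact_Icc (a := -(Real.pi / h))
      (b := Real.pi / h)).exists_bound_of_continuousOn hfc.continuousOn
    refine MemLp.of_bound hfc.aestronglyMeasurable C ?_
    refine (ae_restrict_iff' measurableSet_Ioc).mpr (Filter.Eventually.of_forall ?_)
    intro ξ hξ
    exact hC ξ (Set.Ioc_subset_Icc_self hξ)
  have key := hasSum_sq_fourierCoeffOn hp hL
  have hc : ∀ n : ℤ, ‖fourierCoeffOn hp f (-n)‖ ^ 2 = (h * (2 * Real.pi)⁻¹) ^ 2 *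
      (gOne h t n).re ^ 2 := by
    intro n
    rw [← gOne_norm, fourierCoeffOn_eq_integral, norm_smul, mul_pow]
    congr 1
    · rw [Real.norm_eq_abs, sq_abs]
      congr 1
      field_simp
      ring
    · congr 2
      unfold gOne
      congr 1
      ext ξ
      rw [fourier_coe_apply, smul_eq_mul, hf, ← Complex.exp_add]
      congr 1
      rw [add_comm]
      congr 1
      have : (h : ℂ) ≠ 0 := by exact_mod_cast hh.ne'
      have : (Real.pi : ℂ) ≠ 0 := by exact_mod_cast Real.pi_ne_zero
      push_cast
      field_simp
      ring
  have key2 := ((Equiv.neg ℤ).hasSum_iff.mpr key).mul_left h⁻¹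
  have e1 : (fun n : ℤ => h * ((2 * Real.pi)⁻¹ * (gOne h t n).re) ^ 2) =
      fun n => h⁻¹ * ((fun i => ‖fourierCoeffOn hp f i‖ ^ 2) ∘ (Equiv.neg ℤ)) n := by
    funext n
    have : ((fun i => ‖fourierCoeffOn hp f i‖ ^ 2) ∘ (Equiv.neg ℤ)) n
      = ‖fourierCoeffOn hp f (-n)‖ ^ 2 := rfl
    rw [this, hc]
    field_simp
  have e2 : sOne h t = h⁻¹ * (Real.pi / h - -(Real.pi / h))⁻¹ •
      ∫ x in (-(Real.pi / h))..(Real.pi / h), ‖f x‖ ^ 2 := by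
    unfold sOne
    have : ∀ ξ, ‖f ξ‖ ^ 2 = Real.exp (-(4 * t / h ^ 2) * (1 - Real.cos (h * ξ))) := by
      intro ξ
      rw [hf]
      simp only
      rw [Complex.norm_exp, Complex.ofReal_re, ← Real.exp_nat_mul]
      congr 1
      push_cast
      ring
    simp only [this]
    rw [smul_eq_mul, ← mul_assoc]
    congr 1
    field_simp
    ring
  rw [e1, e2]
  exact key2

lemma hasSum_mul_aux {α β : Type} (f : α → ℝ) (g : β → ℝ) (a b : ℝ) (hf0 : ∀ x, 0 ≤ f x)
    (hg0 : ∀ x, 0 ≤ g x) (hf : HasSum f a) (hg : HasSum g b) :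
    HasSum (fun x : α × β => f x.1 * g x.2) (a * b) := by
  have h3 : Summable fun x : α × β => f x.1 * g x.2 :=
    Summable.mul_of_nonneg hf.summable hg.summable hf0 hg0
  exact HasSum.mul hf hg h3

lemma hasSum_pi_prod (S : ℝ) : ∀ (d : ℕ) (f : Fin d → ℤ → ℝ), (∀ j n, 0 ≤ f j n) →
    (∀ j, HasSum (f j) S) → HasSum (fun x : Fin d → ℤ => ∏ j, f j (x j)) (S ^ d) := by
  intro d
  induction d with
  | zero =>
    intro f _ _
    simpa using hasSum_unique (fun x : Fin 0 → ℤ => ∏ j, f j (x j))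
  | succ d ih =>
    intro f h0 hS
    have h1 := ih (fun j => f j.succ) (fun j n => h0 _ _) (fun j => hS _)
    have h2 := hasSum_mul_aux (f 0) (fun x : Fin d → ℤ => ∏ j : Fin d, f j.succ (x j)) S (S ^ d)
      (fun n => h0 0 n) (fun x => Finset.prod_nonneg fun j _ => h0 _ _) (hS 0) h1
    have e1 : (fun x : Fin (d+1) → ℤ => ∏ j, f j (x j)) ∘ (Fin.consEquiv (fun _ : Fin (d+1) => ℤ))
        = fun x : ℤ × (Fin d → ℤ) => f 0 x.1 * ∏ j : Fin d, f j.succ (x.2 j) := by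
      funext x
      simp [Fin.prod_univ_succ, Fin.consEquiv]
    rw [← (Fin.consEquiv (fun _ : Fin (d+1) => ℤ)).hasSum_iff, pow_succ', e1]
    exact h2

lemma full_hasSum (d : ℕ) (h t : ℝ) (hh : 0 < h) (y : Fin d → ℤ) :
    HasSum (fun x : Fin d → ℤ => h ^ d * heatKer d h t x y ^ 2) (sOne h t ^ d) := by
  have hshift : ∀ m : ℤ, HasSum (fun n : ℤ => h * ((2 * Real.pi)⁻¹ * (gOne h t (n - m)).re) ^ 2)
      (sOne h t) := by
    intro m
    have := (Equiv.subRight m).hasSum_iff.mpr (one_hasSum h t hh)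
    exact this
  have := hasSum_pi_prod (sOne h t) d
    (fun j n => h * ((2 * Real.pi)⁻¹ * (gOne h t (n - y j)).re) ^ 2)
    (fun j n => by positivity)
    (fun j => hshift (y j))
  have e1 : (fun x : Fin d → ℤ => h ^ d * heatKer d h t x y ^ 2) = fun x : Fin d → ℤ =>
      ∏ j, h * ((2 * Real.pi)⁻¹ * (gOne h t (x j - y j)).re) ^ 2 := by
    funext x
    rw [heatKer_eq d h t hh, ← Finset.prod_pow, Finset.prod_mul_distrib (f := fun _ => h),
      Finset.prod_const, Finset.card_univ, Fintype.card_fin]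
  rw [e1]
  exact this

lemma sOne_lower (h t Tp : ℝ) (ht0 : 0 ≤ t) (ht : t ≤ Tp) (hh : 0 < h) (h1 : h < 1) :
    (2 * Real.pi)⁻¹ * (2 * Real.exp (-(2 * Tp))) ≤ sOne h t := by
  have hpi : 1 ≤ Real.pi / h := by
    rw [le_div_iff₀ hh]
    linarith [Real.pi_gt_three]
  unfold sOne
  gcongr
  have hc : Continuous fun ξ : ℝ => Real.exp (-(4 * t / h ^ 2) * (1 - Real.cos (h * ξ))) := by
    fun_prop
  calc 2 * Real.exp (-(2 * Tp)) = ∫ ξ in (-1 : ℝ)..1, Real.exp (-(2 * Tp)) := by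
        rw [intervalIntegral.integral_const, smul_eq_mul]; ring
    _ ≤ ∫ ξ in (-1 : ℝ)..1, Real.exp (-(4 * t / h ^ 2) * (1 - Real.cos (h * ξ))) := by
        apply intervalIntegral.integral_mono_on (by norm_num) (by simp) (hc.intervalIntegrable _ _)
        intro ξ hξ
        apply Real.exp_le_exp.mpr
        have hcos := Real.one_sub_sq_div_two_le_cos (x := h * ξ)
        have hx : ξ ^ 2 ≤ 1 := by nlinarith [hξ.1, hξ.2]
        have h3 : (4 * t / h ^ 2) * (1 - Real.cos (h * ξ)) ≤
            (4 * t / h ^ 2) * ((h * ξ) ^ 2 / 2) := by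
          gcongr
          linarith
        have h4 : (4 * t / h ^ 2) * ((h * ξ) ^ 2 / 2) = 2 * t * ξ ^ 2 := by
          field_simp
          ring
        nlinarith
    _ ≤ _ := by
        apply intervalIntegral.integral_mono_interval (by linarith) (by norm_num) hpi
        · exact Filter.Eventually.of_forall fun ξ => (Real.exp_pos _).le
        · exact hc.intervalIntegrable _ _

lemma sOne_upper (h t Tm : ℝ) (hTm : 0 < Tm) (ht : Tm ≤ t) (hh : 0 < h) :
    sOne h t ≤ (2 * Real.pi)⁻¹ * ∫ ξ : ℝ, Real.exp (-(8 * Tm / Real.pi ^ 2) * ξ ^ 2) := by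
  have hpi : 0 < Real.pi / h := div_pos Real.pi_pos hh
  have hpp := Real.pi_pos
  have hint : Integrable fun ξ : ℝ => Real.exp (-(8 * Tm / Real.pi ^ 2) * ξ ^ 2) :=
    integrable_exp_neg_mul_sq (by positivity)
  have hc : Continuous fun ξ : ℝ => Real.exp (-(4 * t / h ^ 2) * (1 - Real.cos (h * ξ))) := by
    fun_prop
  unfold sOne
  gcongr
  calc _ ≤ ∫ ξ in (-(Real.pi / h))..(Real.pi / h),
        Real.exp (-(8 * Tm / Real.pi ^ 2) * ξ ^ 2) := by
        apply intervalIntegral.integral_mono_on (by linarith) (hc.intervalIntegrable _ _)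
          hint.intervalIntegrable
        intro ξ hξ
        apply Real.exp_le_exp.mpr
        have habs : |h * ξ| ≤ Real.pi := by
          rw [abs_mul, abs_of_pos hh, mul_comm, ← le_div_iff₀ hh]
          exact abs_le.mpr hξ
        have hcos := Real.cos_le_one_sub_mul_cos_sq habs
        have ht0 : 0 < t := by linarith
        have h3 : (4 * t / h ^ 2) * (2 / Real.pi ^ 2 * (h * ξ) ^ 2) ≤
            (4 * t / h ^ 2) * (1 - Real.cos (h * ξ)) := by
          gcongr
          linarith
        have h4 : (4 * t / h ^ 2) * (2 / Real.pi ^ 2 * (h * ξ) ^ 2)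
            = (8 * t / Real.pi ^ 2) * ξ ^ 2 := by
          field_simp
          ring
        have h5 : (8 * Tm / Real.pi ^ 2) * ξ ^ 2 ≤ (8 * t / Real.pi ^ 2) * ξ ^ 2 := by
          gcongr
        linarith
    _ ≤ _ := by
        rw [intervalIntegral.integral_of_le (by linarith)]
        exact setIntegral_le_integral hint
          (Filter.Eventually.of_forall fun ξ => (Real.exp_pos _).le)

/-- Two-sided `ℓ²` bound for the discrete heat kernel, uniformly for
`T_− ≤ t ≤ T_+` and small mesh size. -/
theorem stmt_13 (d : ℕ) (Tm Tp : ℝ) (hTm : 0 < Tm) (hTT : Tm < Tp) :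
    ∃ h₀ > (0:ℝ), ∃ κ > (0:ℝ),
      ∀ t : ℝ, Tm ≤ t → t ≤ Tp → ∀ h : ℝ, 0 < h → h < h₀ → ∀ y : Fin d → ℤ,
        κ⁻¹ ≤ Real.sqrt (∑' x : Fin d → ℤ, h ^ d * heatKer d h t x y ^ 2) ∧
        Real.sqrt (∑' x : Fin d → ℤ, h ^ d * heatKer d h t x y ^ 2) ≤ κ := by
  set A := (2 * Real.pi)⁻¹ * (2 * Real.exp (-(2 * Tp))) with hA
  set B := (2 * Real.pi)⁻¹ * ∫ ξ : ℝ, Real.exp (-(8 * Tm / Real.pi ^ 2) * ξ ^ 2) with hB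
  have hA0 : 0 < A := by have := Real.pi_pos; positivity
  have hsA : 0 < Real.sqrt (A ^ d) := Real.sqrt_pos.mpr (pow_pos hA0 d)
  refine ⟨1, one_pos, max (Real.sqrt (A ^ d))⁻¹ (Real.sqrt (B ^ d)),
    lt_max_of_lt_left (inv_pos.mpr hsA), ?_⟩
  intro t ht1 ht2 h hh h1 y
  rw [(full_hasSum d h t hh y).tsum_eq]
  have hl := sOne_lower h t Tp (by linarith) ht2 hh h1
  have hu := sOne_upper h t Tm hTm ht1 hh
  rw [← hA] at hl
  rw [← hB] at hu
  constructor
  · calc _ ≤ ((Real.sqrt (A ^ d))⁻¹)⁻¹ :=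
          inv_anti₀ (inv_pos.mpr hsA) (le_max_left _ _)
      _ = Real.sqrt (A ^ d) := inv_inv _
      _ ≤ _ := Real.sqrt_le_sqrt (pow_le_pow_left₀ hA0.le hl d)
  · exact (Real.sqrt_le_sqrt (pow_le_pow_left₀ (hA0.le.trans hl) hu d)).trans (le_max_right _ _)
end
end

section
/- For every s>0, (1/2)·ln(1+s) ≤ ln(s+√(s²+1)) − s/(1+√(s²+1)) ≤ ln(1+s); that is, the function ζ(s) = arcsinh(s) + (1−√(s²+1))/s satisfies (1/2)ln(1+s) ≤ ζ(s) ≤ ln(1+s) on (0,∞). -/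
theorem aux_low (t : ℝ) (h0 : 0 ≤ t) (h1 : t < 1) :
    0 ≤ 3 / 2 * Real.log (1 + t) - 1 / 2 * Real.log (1 - t) - t
      - 1 / 2 * Real.log (1 + 2 * t - t ^ 2) := by
  have hd : ∀ x ∈ Set.Ico (0 : ℝ) 1, HasDerivAt (fun t : ℝ => 3 / 2 * Real.log (1 + t)
      - 1 / 2 * Real.log (1 - t) - t - 1 / 2 * Real.log (1 + 2 * t - t ^ 2))
      (3 / 2 * (1 / (1 + x)) - 1 / 2 * (-1 / (1 - x)) - 1
        - 1 / 2 * ((2 - 2 * x) / (1 + 2 * x - x ^ 2))) x := by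
    intro x ⟨hx0, hx1⟩
    have e1 : HasDerivAt (fun t : ℝ => 1 + t) 1 x := (hasDerivAt_id x).const_add 1
    have e2 : HasDerivAt (fun t : ℝ => 1 - t) (-1) x := (hasDerivAt_id x).const_sub 1
    have e3 : HasDerivAt (fun t : ℝ => 1 + 2 * t - t ^ 2) (2 - 2 * x) x := by
      have := (((hasDerivAt_id x).const_mul 2).const_add 1).sub (hasDerivAt_pow 2 x)
      exact this.congr_deriv (by norm_num)
    exact ((((e1.log (by linarith)).const_mul (3 / 2)).sub
      ((e2.log (by linarith)).const_mul (1 / 2))).sub (hasDerivAt_id x)).sub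
      ((e3.log (by nlinarith)).const_mul (1 / 2))
  have hm := monotoneOn_of_deriv_nonneg (convex_Ico (0 : ℝ) 1)
    (fun x hx => (hd x hx).continuousAt.continuousWithinAt)
    (fun x hx => (hd x (interior_subset hx)).differentiableAt.differentiableWithinAt)
    (fun x hx => by
      have hx := interior_subset hx
      rw [(hd x hx).deriv]
      obtain ⟨hx0, hx1⟩ := hx
      have p1 : 0 < 1 + x := by linarith
      have p2 : 0 < 1 - x := by linarith
      have p3 : 0 < 1 + 2 * x - x ^ 2 := by nlinarith
      have p4 : 0 ≤ 2 - x := by linarith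
      have : 3 / 2 * (1 / (1 + x)) - 1 / 2 * (-1 / (1 - x)) - 1
        - 1 / 2 * ((2 - 2 * x) / (1 + 2 * x - x ^ 2))
        = x * (2 - x) * (1 + x ^ 2) / ((1 + x) * (1 - x) * (1 + 2 * x - x ^ 2)) := by
        field_simp
        ring
      rw [this]
      positivity)
  have := hm (a := 0) (b := t) ⟨le_rfl, one_pos⟩ ⟨h0, h1⟩ h0
  simpa using this

theorem aux_up (t : ℝ) (h0 : 0 ≤ t) (h1 : t < 1) :
    0 ≤ Real.log (1 + 2 * t - t ^ 2) - 2 * Real.log (1 + t) + t := by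
  have hd : ∀ x ∈ Set.Ico (0 : ℝ) 1, HasDerivAt (fun t : ℝ =>
      Real.log (1 + 2 * t - t ^ 2) - 2 * Real.log (1 + t) + t)
      ((2 - 2 * x) / (1 + 2 * x - x ^ 2) - 2 * (1 / (1 + x)) + 1) x := by
    intro x ⟨hx0, hx1⟩
    have e1 : HasDerivAt (fun t : ℝ => 1 + t) 1 x := (hasDerivAt_id x).const_add 1
    have e3 : HasDerivAt (fun t : ℝ => 1 + 2 * t - t ^ 2) (2 - 2 * x) x := by
      have := (((hasDerivAt_id x).const_mul 2).const_add 1).sub (hasDerivAt_pow 2 x)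
      exact this.congr_deriv (by norm_num)
    exact ((e3.log (by nlinarith)).sub ((e1.log (by linarith)).const_mul 2)).add (hasDerivAt_id x)
  have hm := monotoneOn_of_deriv_nonneg (convex_Ico (0 : ℝ) 1)
    (fun x hx => (hd x hx).continuousAt.continuousWithinAt)
    (fun x hx => (hd x (interior_subset hx)).differentiableAt.differentiableWithinAt)
    (fun x hx => by
      have hx := interior_subset hx
      rw [(hd x hx).deriv]
      obtain ⟨hx0, hx1⟩ := hx
      have p1 : 0 < 1 + x := by linarith
      have p2 : 0 < 1 - x := by linarith
      have p3 : 0 < 1 + 2 * x - x ^ 2 := by nlinarith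
      have : (2 - 2 * x) / (1 + 2 * x - x ^ 2) - 2 * (1 / (1 + x)) + 1
        = (1 - x) * (1 + x ^ 2) / ((1 + x) * (1 + 2 * x - x ^ 2)) := by
        field_simp
        ring
      rw [this]
      positivity)
  have := hm (a := 0) (b := t) ⟨le_rfl, one_pos⟩ ⟨h0, h1⟩ h0
  simpa using this


/-- For `s>0`, `(1/2)ln(1+s) ≤ ln(s+√(s²+1)) − s/(1+√(s²+1)) ≤ ln(1+s)`; that is,
`ζ(s) = arcsinh(s) + (1−√(s²+1))/s` satisfies `(1/2)ln(1+s) ≤ ζ(s) ≤ ln(1+s)`. -/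
theorem stmt_15 (s : ℝ) (hs : 0 < s) :
    (1 / 2) * Real.log (1 + s)
        ≤ Real.log (s + Real.sqrt (s ^ 2 + 1)) - s / (1 + Real.sqrt (s ^ 2 + 1)) ∧
    Real.log (s + Real.sqrt (s ^ 2 + 1)) - s / (1 + Real.sqrt (s ^ 2 + 1))
        ≤ Real.log (1 + s) ∧
    Real.arsinh s + (1 - Real.sqrt (s ^ 2 + 1)) / s
        = Real.log (s + Real.sqrt (s ^ 2 + 1)) - s / (1 + Real.sqrt (s ^ 2 + 1)) := by
  have hr2 : Real.sqrt (s ^ 2 + 1) ^ 2 = s ^ 2 + 1 := Real.sq_sqrt (by positivity)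
  have hr0 : 0 ≤ Real.sqrt (s ^ 2 + 1) := Real.sqrt_nonneg _
  have h3 : Real.arsinh s = Real.log (s + Real.sqrt (s ^ 2 + 1)) := by
    rw [Real.arsinh, add_comm (s ^ 2) 1]
  rw [h3]
  generalize Real.sqrt (s ^ 2 + 1) = r at *
  have hp : 0 < 1 + r := by linarith
  obtain ⟨t, ht⟩ : ∃ t, t = s / (1 + r) := ⟨_, rfl⟩
  have ht0 : 0 < t := by rw [ht]; positivity
  have ht1 : t < 1 := by rw [ht, div_lt_one hp]; nlinarith
  have q1 : 0 < 1 + t := by linarith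
  have q2 : 0 < 1 - t := by linarith
  have q3 : 0 < 1 + 2 * t - t ^ 2 := by nlinarith
  have hst : s = t * (1 + r) := by rw [ht]; field_simp
  have hrt : r * (1 - t ^ 2) = 1 + t ^ 2 := by
    have : (1 + r) * (r * (1 - t ^ 2)) = (1 + r) * (1 + t ^ 2) := by
      rw [hst] at hr2
      linear_combination hr2
    exact mul_left_cancel₀ hp.ne' this
  have a1 : s + r = (1 + t) / (1 - t) := by
    rw [eq_div_iff q2.ne']
    apply mul_left_cancel₀ q1.ne'
    rw [hst]
    linear_combination (1 + t) * hrt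
  have a2 : 1 + s = (1 + 2 * t - t ^ 2) / ((1 + t) * (1 - t)) := by
    rw [eq_div_iff (by positivity), hst]
    linear_combination t * hrt
  have l1 := aux_low t ht0.le ht1
  have l2 := aux_up t ht0.le ht1
  rw [← ht, a1, a2, Real.log_div q1.ne' q2.ne', Real.log_div q3.ne' (by positivity),
    Real.log_mul q1.ne' q2.ne']
  refine ⟨by linarith, by linarith, ?_⟩
  have : (1 - r) / s = -t := by
    rw [div_eq_iff hs.ne', ht]
    field_simp
    linear_combination -hr2
  rw [this]
  ring
end

section
/- (Pointwise Gaussian-type upper bound for the discrete heat kernel.) There exists a constant C>0 depending only on d such that for all h>0, all t>0 and all x,y ∈ ℤ^d, p_{d,h}(t,hx,hy) ≤ C·t^{−d/2}·exp(−Σ_{j=1}^d (1/2)·|x_j−y_j|·ln(1 + h²|x_j−y_j|/(2t))). -/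
open scoped BigOperators
open MeasureTheory

noncomputable section

theorem aux_shift (τ a : ℝ) (u : ℤ) :
    (∫ x in (-Real.pi)..Real.pi, Complex.exp (-(2 * τ) * (1 - Complex.cos (x : ℂ)) + Complex.I * u * (x : ℂ)))
    = ∫ x in (-Real.pi)..Real.pi, Complex.exp (-(2 * τ) * (1 - Complex.cos ((x : ℂ) + a * Complex.I))
        + Complex.I * u * ((x : ℂ) + a * Complex.I)) := by
  have H := Complex.integral_boundary_rect_eq_zero_of_differentiableOn
    (fun z : ℂ => Complex.exp (-(2 * τ) * (1 - Complex.cos z) + Complex.I * u * z))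
    (⟨-Real.pi, 0⟩ : ℂ) (⟨Real.pi, a⟩ : ℂ) (by
      apply Differentiable.differentiableOn
      fun_prop)
  simp only at H
  have hper : ∀ y : ℝ, Complex.exp (-(2 * τ) * (1 - Complex.cos ((Real.pi : ℂ) + y * Complex.I))
        + Complex.I * u * ((Real.pi : ℂ) + y * Complex.I))
      = Complex.exp (-(2 * τ) * (1 - Complex.cos (((-Real.pi : ℝ) : ℂ) + y * Complex.I))
        + Complex.I * u * (((-Real.pi : ℝ) : ℂ) + y * Complex.I)) := by
    intro y
    have e : (Real.pi : ℂ) + y * Complex.I = (((-Real.pi : ℝ) : ℂ) + y * Complex.I) + 2 * Real.pi := by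
      push_cast; ring
    rw [e, Complex.cos_add_two_pi, Complex.exp_eq_exp_iff_exists_int]
    exact ⟨u, by ring⟩
  simp_rw [hper] at H
  simp only [Complex.ofReal_zero, zero_mul, add_zero] at H
  linear_combination H

theorem aux_norm (τ a x : ℝ) (u : ℤ) :
    ‖Complex.exp (-(2 * τ) * (1 - Complex.cos ((x : ℂ) + a * Complex.I))
        + Complex.I * u * ((x : ℂ) + a * Complex.I))‖
    = Real.exp (-(2 * τ) * (1 - Real.cos x * Real.cosh a) - u * a) := by
  rw [Complex.norm_exp, Complex.cos_add_mul_I]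
  congr 1
  rw [← Complex.ofReal_cos, ← Complex.ofReal_sin, ← Complex.ofReal_cosh, ← Complex.ofReal_sinh]
  simp [Complex.mul_re, Complex.mul_im, -Complex.ofReal_cos, -Complex.ofReal_sin, -Complex.ofReal_cosh, -Complex.ofReal_sinh]
  ring

theorem aux_1d (τ a : ℝ) (hτ : 0 < τ) (u : ℤ) :
    ‖∫ x in (-Real.pi)..Real.pi, Complex.exp (-(2 * τ) * (1 - Complex.cos (x : ℂ)) + Complex.I * u * (x : ℂ))‖
    ≤ Real.exp (2 * τ * (Real.cosh a - 1) - u * a) * Real.sqrt (Real.pi / (4 * τ / Real.pi ^ 2)) := by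
  have hpi := Real.pi_pos
  rw [aux_shift τ a u]
  have hb : 0 < 4 * τ / Real.pi ^ 2 := by positivity
  have hint := (integrable_exp_neg_mul_sq hb).const_mul (Real.exp (2 * τ * (Real.cosh a - 1) - u * a))
  calc _ ≤ ∫ x in (-Real.pi)..Real.pi, Real.exp (2 * τ * (Real.cosh a - 1) - u * a) *
            Real.exp (-(4 * τ / Real.pi ^ 2) * x ^ 2) := by
        apply intervalIntegral.norm_integral_le_of_norm_le (by linarith)
        · refine Filter.Eventually.of_forall fun x hx => ?_
          rw [aux_norm, ← Real.exp_add]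
          apply Real.exp_le_exp.mpr
          have h1 := Real.cos_le_one_sub_mul_cos_sq (x := x) (abs_le.mpr ⟨hx.1.le, hx.2⟩)
          have h2 := Real.one_le_cosh a
          have h3 : 0 ≤ 1 - Real.cos x := by linarith [Real.cos_le_one x]
          have h4 : 2 / Real.pi ^ 2 * x ^ 2 ≤ (1 - Real.cos x) * Real.cosh a := by nlinarith
          have h5 : 4 * τ / Real.pi ^ 2 * x ^ 2 = 2 * τ * (2 / Real.pi ^ 2 * x ^ 2) := by ring
          have := mul_le_mul_of_nonneg_left h4 (by positivity : 0 ≤ 2 * τ)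
          linarith
        · exact hint.intervalIntegrable
    _ ≤ ∫ x : ℝ, Real.exp (2 * τ * (Real.cosh a - 1) - u * a) *
            Real.exp (-(4 * τ / Real.pi ^ 2) * x ^ 2) := by
        rw [intervalIntegral.integral_of_le (by linarith)]
        exact setIntegral_le_integral hint (Filter.Eventually.of_forall fun x => by positivity)
    _ = _ := by rw [integral_const_mul, integral_gaussian]

theorem aux_opt (τ : ℝ) (hτ : 0 < τ) (u : ℤ) : ∃ a : ℝ,
    2 * τ * (Real.cosh a - 1) - u * a ≤ -(1 / 2 * |(u : ℝ)| * Real.log (1 + |(u : ℝ)| / (2 * τ))) := by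
  have key : ∀ s : ℝ, 0 ≤ s → 2 * τ * (Real.cosh (Real.log (1 + s)) - 1) - (2 * τ * s) * Real.log (1 + s)
      ≤ - (1 / 2 * (2 * τ * s) * Real.log (1 + s)) := by
    intro s hs
    have h1 := Real.one_sub_inv_le_log_of_pos (by linarith : 0 < 1 + s)
    have h2 : Real.cosh (Real.log (1 + s)) - 1 = s / 2 * (1 - (1 + s)⁻¹) := by
      rw [Real.cosh_log (by linarith)]
      field_simp
      ring
    rw [h2]
    have := mul_le_mul_of_nonneg_left h1 (by positivity : 0 ≤ τ * s)
    linarith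
  have k := key (|(u : ℝ)| / (2 * τ)) (by positivity)
  have e : 2 * τ * (|(u : ℝ)| / (2 * τ)) = |(u : ℝ)| := by field_simp
  rw [e] at k
  rcases abs_cases (u : ℝ) with ⟨h, _⟩ | ⟨h, _⟩
  · refine ⟨Real.log (1 + |(u : ℝ)| / (2 * τ)), ?_⟩
    refine le_trans (le_of_eq ?_) k
    nth_rewrite 4 [h]
    rfl
  · refine ⟨-Real.log (1 + |(u : ℝ)| / (2 * τ)), ?_⟩
    refine le_trans (le_of_eq ?_) k
    have : (u : ℝ) = -|(u : ℝ)| := by linarith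
    rw [Real.cosh_neg]
    linear_combination (-Real.log (1 + |(u : ℝ)| / (2 * τ))) * (-1) * this

/-- the constant -/
def auxK : ℝ := Real.sqrt (Real.pi ^ 3 / 4)

theorem aux_factor (h t : ℝ) (hh : 0 < h) (ht : 0 < t) (u : ℤ) :
    ‖∫ ξ in Set.Icc (-(Real.pi / h)) (Real.pi / h),
      Complex.exp (-(2 * (t / h ^ 2) : ℝ) * (1 - Complex.cos ((h * ξ : ℝ) : ℂ)) + Complex.I * u * ((h * ξ : ℝ) : ℂ))‖
    ≤ auxK * t ^ (-(1 : ℝ) / 2) * Real.exp (-(1 / 2 * |(u : ℝ)| * Real.log (1 + h ^ 2 * |(u : ℝ)| / (2 * t)))) := by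
  have hpi := Real.pi_pos
  have hτ : 0 < t / h ^ 2 := by positivity
  have hp : 0 < Real.pi / h := by positivity
  rw [integral_Icc_eq_integral_Ioc, ← intervalIntegral.integral_of_le (by linarith)]
  have := intervalIntegral.integral_comp_mul_left (a := -(Real.pi / h)) (b := Real.pi / h)
    (fun x : ℝ => Complex.exp (-(2 * (t / h ^ 2) : ℝ) * (1 - Complex.cos (x : ℂ)) + Complex.I * u * (x : ℂ))) hh.ne'
  rw [this]
  have e1 : h * -(Real.pi / h) = -Real.pi := by field_simp
  have e2 : h * (Real.pi / h) = Real.pi := by field_simp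
  rw [e1, e2, norm_smul]
  obtain ⟨a, ha⟩ := aux_opt (t / h ^ 2) hτ u
  have B := aux_1d (t / h ^ 2) a hτ u
  have B2 := B.trans (mul_le_mul_of_nonneg_right (Real.exp_le_exp.mpr ha) (Real.sqrt_nonneg _))
  have e3 : |(u : ℝ)| / (2 * (t / h ^ 2)) = h ^ 2 * |(u : ℝ)| / (2 * t) := by field_simp
  have e4 : Real.sqrt (Real.pi / (4 * (t / h ^ 2) / Real.pi ^ 2)) = h * (auxK * t ^ (-(1 : ℝ) / 2)) := by
    have : Real.pi / (4 * (t / h ^ 2) / Real.pi ^ 2) = h ^ 2 * (Real.pi ^ 3 / 4 * t⁻¹) := by field_simp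
    rw [this, Real.sqrt_mul (by positivity), Real.sqrt_sq hh.le, Real.sqrt_mul (by positivity), Real.sqrt_inv,
      Real.sqrt_eq_rpow t, ← Real.rpow_neg ht.le, auxK]
    norm_num
  rw [e3, e4] at B2
  have e5 : ‖h⁻¹‖ = h⁻¹ := by rw [Real.norm_eq_abs, abs_of_pos (by positivity)]
  rw [e5]
  push_cast at B2 ⊢
  refine (mul_le_mul_of_nonneg_left B2 (by positivity)).trans (le_of_eq ?_)
  field_simp

/-- Pointwise Gaussian-type upper bound for the discrete heat kernel. -/
theorem stmt_16 (d : ℕ) :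
    ∃ C > (0:ℝ), ∀ h t : ℝ, 0 < h → 0 < t → ∀ x y : Fin d → ℤ,
      heatKer d h t x y ≤ C * t ^ (-(d : ℝ) / 2) *
        Real.exp (-∑ j : Fin d, (1 / 2) * |((x j - y j : ℤ) : ℝ)| *
          Real.log (1 + h ^ 2 * |((x j - y j : ℤ) : ℝ)| / (2 * t))) := by
  have hpi := Real.pi_pos
  have hK : 0 < auxK := Real.sqrt_pos.mpr (by positivity)
  refine ⟨((2 * Real.pi) ^ d)⁻¹ * auxK ^ d, by positivity, ?_⟩
  intro h t hh ht x y
  unfold heatKer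
  rw [mul_assoc, mul_assoc]
  refine mul_le_mul_of_nonneg_left ?_ (by positivity)
  refine (Complex.re_le_norm _).trans ?_
  have e : (∫ ξ in Set.Icc (fun _ : Fin d => -(Real.pi / h)) (fun _ => Real.pi / h),
      Complex.exp (((-(2 * t / h ^ 2) * ∑ j, (1 - Real.cos (h * ξ j)) : ℝ) : ℂ)
        + Complex.I * ((∑ j, (h * (x j : ℝ) - h * (y j : ℝ)) * ξ j : ℝ) : ℂ)))
      = ∏ j : Fin d, ∫ ξ in Set.Icc (-(Real.pi / h)) (Real.pi / h),
      Complex.exp (-(2 * (t / h ^ 2) : ℝ) * (1 - Complex.cos ((h * ξ : ℝ) : ℂ))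
        + Complex.I * ((x j - y j : ℤ) : ℂ) * ((h * ξ : ℝ) : ℂ)) := by
    rw [← Set.pi_univ_Icc, volume_pi, Measure.restrict_pi_pi, ← integral_fintype_prod_eq_prod]
    congr 1
    funext ξ
    rw [← Complex.exp_sum]
    congr 1
    push_cast
    rw [Finset.mul_sum, Finset.mul_sum, ← Finset.sum_add_distrib]
    refine Finset.sum_congr rfl fun j _ => ?_
    ring
  rw [e, norm_prod]
  refine (Finset.prod_le_prod (fun _ _ => norm_nonneg _)
    (fun j _ => aux_factor h t hh ht (x j - y j))).trans (le_of_eq ?_)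
  rw [Finset.prod_mul_distrib, ← Real.exp_sum, Finset.prod_const, Finset.card_univ, Fintype.card_fin,
    Finset.sum_neg_distrib, mul_pow, mul_assoc, ← Real.rpow_natCast (t ^ (-(1 : ℝ) / 2)) d,
    ← Real.rpow_mul ht.le]
  have e6 : -(1 : ℝ) / 2 * d = -(d : ℝ) / 2 := by ring
  rw [e6]
end
end

section
/- (Thickness is necessary for uniform observability.) Let ω ⊂ ℝ^d be open and assume the sampling property: for every Λ>0 and every x₀ ∈ ℝ^d, h^d·card(ω∩hℤ^d∩Q_Λ(x₀)) → vol(ω∩Q_Λ(x₀)) as h→0⁺ (this holds whenever ω has smooth boundary). Let V ∈ C_b(ℝ^d;ℝ). Assume there exist T>0, h₀>0 and C>0 such that for every 0<h≤h₀ and every u₀ ∈ ℓ²(hℤ^d), the solution u(t) = e^{−tP_h}u₀ satisfies ‖u(T)‖²_{ℓ²(hℤ^d)} ≤ C·∫₀^T ‖u(t)‖²_{ℓ²(ω)} dt + C·e^{−C/h²}·‖u₀‖²_{ℓ²(hℤ^d)}. Then ω is thick: there exist L>0 and γ ∈ (0,1] such that for every x ∈ ℝ^d, vol(ω∩(x+Q_L(0)))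 ≥ γ·vol(Q_L(0)). -/
open scoped BigOperators
open MeasureTheory

noncomputable section

open scoped ENNReal

/-- An open set `ω ⊂ ℝ^d` is `(L,γ)`-equidistributed if each cube `Lk+[−L/2,L/2]^d`
contains a cube `z_k+[−γL/2,γL/2]^d` included in `ω`. -/
def Equidistributed (d : ℕ) (L γ : ℝ) (ω : Set (Fin d → ℝ)) : Prop :=
  0 < L ∧ 0 < γ ∧ γ ≤ 1 ∧
    ∃ z : (Fin d → ℤ) → Fin d → ℝ, ∀ k : Fin d → ℤ,
      {x : Fin d → ℝ | ∀ i, |x i - z k i| ≤ γ * L / 2}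
        ⊆ ω ∩ {x : Fin d → ℝ | ∀ i, |x i - L * (k i : ℝ)| ≤ L / 2}

instance : Fact ((1:ℝ≥0∞) ≤ 2) := ⟨one_le_two⟩

/-- The Hilbert space `ℓ²(hℤ^d)` (indexed by `ℤ^d`). -/
abbrev Hsp (d : ℕ) : Type := lp (fun _ : (Fin d → ℤ) => ℂ) 2

/-- `P` realizes the discrete Schrödinger operator `P_h = −Δ_h + V` on `ℓ²(hℤ^d)`. -/
def RealizesPh (d : ℕ) (h : ℝ) (V : (Fin d → ℝ) → ℝ) (P : Hsp d →L[ℂ] Hsp d) : Prop :=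
  ∀ (w : Hsp d) (k : Fin d → ℤ),
    (P w : ∀ _ : (Fin d → ℤ), ℂ) k
      = -discLap d h (w : ∀ _ : (Fin d → ℤ), ℂ) k
        + (V (pt d h k) : ℂ) * (w : ∀ _ : (Fin d → ℤ), ℂ) k

/-- `‖V‖_{L^∞} = sup |V|`. -/
def supNorm (d : ℕ) (V : (Fin d → ℝ) → ℝ) : ℝ := ⨆ x, |V x|

/-- The squared `ℓ²(E∩hℤ^d)` norm of an element of `ℓ²(hℤ^d)`. -/
def sqNormOn (d : ℕ) (h : ℝ) (E : Set (Fin d → ℝ)) (w : Hsp d) : ℝ :=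
  ∑' k : Fin d → ℤ,
    Set.indicator E (fun _ => ‖(w : ∀ _ : (Fin d → ℤ), ℂ) k‖ ^ 2) (pt d h k)

/-- The cube `Q_Λ(x₀) = x₀+[−Λ/2,Λ/2]^d`. -/
def Qcube (d : ℕ) (Λ : ℝ) (x₀ : Fin d → ℝ) : Set (Fin d → ℝ) :=
  {x : Fin d → ℝ | ∀ i, |x i - x₀ i| ≤ Λ / 2}

lemma tanh_step (y h : ℝ) (h0 : 0 ≤ h) (h1 : h ≤ 1) :
    h * (Real.cosh y)⁻¹ ≤ 4 * (Real.tanh ((y + h)/2) - Real.tanh (y/2)) := by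
  have e1 : Real.tanh ((y + h)/2) - Real.tanh (y/2)
      = Real.sinh (h/2) / (Real.cosh (y/2) * Real.cosh ((y+h)/2)) := by
    have a1 := Real.cosh_pos ((y+h)/2)
    have a2 := Real.cosh_pos (y/2)
    rw [Real.tanh_eq_sinh_div_cosh, Real.tanh_eq_sinh_div_cosh,
      show h/2 = (y+h)/2 - y/2 by ring, Real.sinh_sub]
    field_simp
  have e2 : h / 2 ≤ Real.sinh (h/2) := Real.self_le_sinh_iff.2 (by linarith)
  have e3 : Real.cosh (y/2) * Real.cosh ((y+h)/2) ≤ 2 * Real.cosh y := by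
    have c1 : Real.cosh ((y+h)/2) ≤ 2 * Real.cosh (y/2) := by
      have : Real.exp (h/2) ≤ 2 := by
        have h3 : Real.exp (h/2) ^ 2 = Real.exp h := by rw [← Real.exp_nat_mul]; congr 1; push_cast; ring
        have h4 : Real.exp h ≤ Real.exp 1 := Real.exp_le_exp.2 h1
        have := Real.exp_one_lt_d9
        nlinarith [Real.exp_pos (h/2)]
      have h5 : Real.exp (-(h/2)) ≤ 2 := le_trans (Real.exp_le_exp.2 (by linarith)) this
      rw [Real.cosh_eq, Real.cosh_eq, show -((y+h)/2) = -(y/2) + -(h/2) by ring,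
        show (y+h)/2 = y/2 + h/2 by ring, Real.exp_add, Real.exp_add]
      nlinarith [Real.exp_pos (y/2), Real.exp_pos (-(y/2))]
    have c2 : Real.cosh y = 2 * Real.cosh (y/2)^2 - 1 := by
      have := Real.cosh_two_mul (y/2)
      have h6 := Real.cosh_sq (y/2)
      rw [show 2 * (y/2) = y by ring] at this
      linarith
    nlinarith [Real.one_le_cosh (y/2)]
  rw [e1]
  have a1 := Real.cosh_pos ((y+h)/2)
  have a2 := Real.cosh_pos (y/2)
  have a3 := Real.cosh_pos y
  rw [← div_eq_mul_inv, mul_div_assoc', div_le_div_iff₀ a3 (by positivity)]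
  nlinarith

lemma sum1_range (x h : ℝ) (h0 : 0 ≤ h) (h1 : h ≤ 1) (a : ℤ) (n : ℕ) :
    ∑ j ∈ Finset.range n, h * (Real.cosh (h * ((a + j : ℤ) : ℝ) - x))⁻¹ ≤ 8 := by
  calc _ ≤ ∑ j ∈ Finset.range n, (4 * Real.tanh ((h * ((a + (j+1 : ℕ) : ℤ) : ℝ) - x)/2)
          - 4 * Real.tanh ((h * ((a + j : ℤ) : ℝ) - x)/2)) := by
        refine Finset.sum_le_sum fun j _ => ?_
        have := tanh_step (h * ((a + j : ℤ) : ℝ) - x) h h0 h1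
        rw [show h * ((a + j : ℤ) : ℝ) - x + h = h * ((a + (j+1 : ℕ) : ℤ) : ℝ) - x by push_cast; ring] at this
        linarith
    _ ≤ 8 := by
        rw [Finset.sum_range_sub (fun j : ℕ => 4 * Real.tanh ((h * ((a + j : ℤ) : ℝ) - x)/2))]
        have := Real.tanh_lt_one ((h * ((a + n : ℤ) : ℝ) - x)/2)
        have := Real.neg_one_lt_tanh ((h * ((a + (0:ℕ) : ℤ) : ℝ) - x)/2)
        linarith

lemma sum1 (x h : ℝ) (h0 : 0 ≤ h) (h1 : h ≤ 1) (F : Finset ℤ) :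
    ∑ k ∈ F, h * (Real.cosh (h * (k : ℝ) - x))⁻¹ ≤ 8 := by
  obtain ⟨a, ha⟩ := F.bddBelow
  obtain ⟨b, hb⟩ := F.bddAbove
  refine le_trans ?_ (sum1_range x h h0 h1 a (b - a + 1).toNat)
  have inj : Set.InjOn (fun j : ℕ => a + (j : ℤ)) (Finset.range (b - a + 1).toNat) := by
    intro i _ j _ hij; simpa using hij
  rw [← Finset.sum_image (f := fun k : ℤ => h * (Real.cosh (h * (k : ℝ) - x))⁻¹) inj]
  refine Finset.sum_le_sum_of_subset_of_nonneg ?_ fun k _ _ => mul_nonneg h0 (inv_nonneg.2 (Real.cosh_pos _).le)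
  intro k hk
  have h2 := ha hk
  have h3 := hb hk
  simp only [Finset.mem_image, Finset.mem_range]
  exact ⟨(k - a).toNat, by omega, by omega⟩

def phi (d : ℕ) (h : ℝ) (x : Fin d → ℝ) (k : Fin d → ℤ) : ℝ :=
  ∏ i, (Real.cosh (h * (k i : ℝ) - x i))⁻¹

lemma phi_pos (d : ℕ) (h : ℝ) (x : Fin d → ℝ) (k : Fin d → ℤ) : 0 < phi d h x k :=
  Finset.prod_pos fun i _ => inv_pos.2 (Real.cosh_pos _)

lemma phi_le_one (d : ℕ) (h : ℝ) (x : Fin d → ℝ) (k : Fin d → ℤ) : phi d h x k ≤ 1 :=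
  Finset.prod_le_one (fun i _ => (inv_pos.2 (Real.cosh_pos _)).le)
    fun i _ => inv_le_one_of_one_le₀ (Real.one_le_cosh _)

lemma sum_phi (d : ℕ) (h : ℝ) (h0 : 0 ≤ h) (h1 : h ≤ 1) (x : Fin d → ℝ) (F : Finset (Fin d → ℤ)) :
    ∑ k ∈ F, h ^ d * phi d h x k ≤ 8 ^ d := by
  classical
  have e : ∀ k, h ^ d * phi d h x k = ∏ i, h * (Real.cosh (h * (k i : ℝ) - x i))⁻¹ := by
    intro k; simp [phi, Finset.prod_mul_distrib]
  simp_rw [e]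
  calc _ ≤ ∑ k ∈ Fintype.piFinset (fun i => F.image (fun k : Fin d → ℤ => k i)),
        ∏ i, h * (Real.cosh (h * (k i : ℝ) - x i))⁻¹ := by
        refine Finset.sum_le_sum_of_subset_of_nonneg ?_ fun k _ _ =>
          Finset.prod_nonneg fun i _ => mul_nonneg h0 (inv_nonneg.2 (Real.cosh_pos _).le)
        intro k hk
        simp only [Fintype.mem_piFinset, Finset.mem_image]
        exact fun i => ⟨k, hk, rfl⟩
    _ = ∏ i, ∑ k ∈ F.image (fun k : Fin d → ℤ => k i), h * (Real.cosh (h * (k : ℝ) - x i))⁻¹ := by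
        rw [Finset.prod_univ_sum]
    _ ≤ ∏ i : Fin d, (8 : ℝ) := Finset.prod_le_prod
        (fun i _ => Finset.sum_nonneg fun _ _ => mul_nonneg h0 (inv_nonneg.2 (Real.cosh_pos _).le))
        (fun i _ => sum1 _ _ h0 h1 _)
    _ = 8 ^ d := by simp

lemma phi_summable (d : ℕ) (h : ℝ) (h0 : 0 < h) (h1 : h ≤ 1) (x : Fin d → ℝ) :
    Summable (phi d h x) := by
  have : Summable (fun k => h ^ d * phi d h x k) :=
    summable_of_sum_le (fun k => mul_nonneg (by positivity) (phi_pos d h x k).le)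
      (sum_phi d h h0.le h1 x)
  exact (summable_mul_left_iff (by positivity)).1 this

lemma phi_tsum_le (d : ℕ) (h : ℝ) (h0 : 0 < h) (h1 : h ≤ 1) (x : Fin d → ℝ) :
    h ^ d * ∑' k, phi d h x k ≤ 8 ^ d := by
  rw [← tsum_mul_left]
  exact ((phi_summable d h h0 h1 x).mul_left _).tsum_le_of_sum_le (sum_phi d h h0.le h1 x)

lemma phi_sq_summable (d : ℕ) (h : ℝ) (h0 : 0 < h) (h1 : h ≤ 1) (x : Fin d → ℝ) :
    Summable (fun k => phi d h x k ^ 2) :=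
  Summable.of_nonneg_of_le (fun k => by positivity)
    (fun k => by nlinarith [phi_pos d h x k, phi_le_one d h x k]) (phi_summable d h h0 h1 x)

lemma phi_tsum_ge (d : ℕ) (h : ℝ) (h0 : 0 < h) (h1 : h ≤ 1) (x : Fin d → ℝ) :
    (((Real.cosh 1)⁻¹) ^ d) ^ 2 ≤ h ^ d * ∑' k, phi d h x k ^ 2 := by
  classical
  let G : Fin d → Finset ℤ := fun i => Finset.Icc ⌈(x i - 1)/h⌉ ⌊(x i + 1)/h⌋
  have hG : ∀ i, 1 ≤ h * ((G i).card : ℝ) := by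
    intro i
    simp only [G, Int.card_Icc]
    have a1 := Int.ceil_lt_add_one ((x i - 1)/h)
    have a2 := Int.lt_floor_add_one ((x i + 1)/h)
    have a3 : (((⌊(x i + 1)/h⌋ + 1 - ⌈(x i - 1)/h⌉ : ℤ)) : ℝ) ≤
      (((⌊(x i + 1)/h⌋ + 1 - ⌈(x i - 1)/h⌉).toNat : ℤ) : ℝ) := by
      exact_mod_cast Int.self_le_toNat _
    push_cast at a3
    have a4 : 2 / h - 1 ≤ (((⌊(x i + 1)/h⌋ + 1 - ⌈(x i - 1)/h⌉).toNat) : ℝ) := by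
      have : (x i + 1)/h - (x i - 1)/h = 2 / h := by ring
      linarith
    have := mul_le_mul_of_nonneg_left a4 h0.le
    have e : h * (2 / h - 1) = 2 - h := by field_simp
    linarith
  calc _ ≤ h ^ d * ∑ k ∈ Fintype.piFinset G, (((Real.cosh 1)⁻¹) ^ d) ^ 2 := by
        rw [Finset.sum_const, Fintype.card_piFinset, nsmul_eq_mul, ← mul_assoc]
        have : 1 ≤ h ^ d * ((∏ i, (G i).card : ℕ) : ℝ) := by
          have e : h ^ d * ((∏ i, (G i).card : ℕ) : ℝ) = ∏ i, h * ((G i).card : ℝ) := by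
            simp [Finset.prod_mul_distrib]
          rw [e]
          exact Finset.prod_induction _ (fun z : ℝ => 1 ≤ z) (fun a b ha hb => one_le_mul_of_one_le_of_one_le ha hb) le_rfl (fun i _ => hG i)
        exact le_mul_of_one_le_left (by positivity) this
    _ ≤ h ^ d * ∑ k ∈ Fintype.piFinset G, phi d h x k ^ 2 := by
        refine mul_le_mul_of_nonneg_left (Finset.sum_le_sum fun k hk => ?_) (by positivity)
        have a0 := Real.cosh_pos 1
        refine pow_le_pow_left₀ (by positivity) ?_ 2
        have : ((Real.cosh 1)⁻¹) ^ d = ∏ i : Fin d, (Real.cosh 1)⁻¹ := by simp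
        rw [this]
        refine Finset.prod_le_prod (fun _ _ => by positivity) fun i _ => ?_
        refine inv_anti₀ (Real.cosh_pos _) ?_
        rw [Real.cosh_le_cosh, abs_one, abs_le]
        have hk' := Fintype.mem_piFinset.1 hk i
        simp only [G, Finset.mem_Icc, Int.ceil_le, Int.le_floor] at hk'
        rw [div_le_iff₀ h0, le_div_iff₀ h0] at hk'
        constructor <;> linarith [hk'.1, hk'.2]
    _ ≤ _ := mul_le_mul_of_nonneg_left
        ((phi_sq_summable d h h0 h1 x).sum_le_tsum _ fun _ _ => by positivity) (by positivity)

lemma phi_far (d : ℕ) (h : ℝ) (x : Fin d → ℝ) (k : Fin d → ℤ) (L : ℝ) (hL : 0 < L) (i : Fin d)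
    (hi : L / 2 < |h * (k i : ℝ) - x i|) : phi d h x k ≤ (Real.cosh (L/2))⁻¹ := by
  classical
  unfold phi
  rw [← Finset.mul_prod_erase _ _ (Finset.mem_univ i)]
  have b1 : ∏ j ∈ Finset.univ.erase i, (Real.cosh (h * (k j : ℝ) - x j))⁻¹ ≤ 1 :=
    Finset.prod_le_one (fun i _ => (inv_pos.2 (Real.cosh_pos _)).le)
    fun i _ => inv_le_one_of_one_le₀ (Real.one_le_cosh _)
  have b2 : (Real.cosh (h * (k i : ℝ) - x i))⁻¹ ≤ (Real.cosh (L/2))⁻¹ := by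
    refine inv_anti₀ (Real.cosh_pos _) ?_
    rw [Real.cosh_le_cosh, abs_of_pos (by linarith : 0 < L/2)]
    exact hi.le
  have b3 : 0 ≤ (Real.cosh (h * (k i : ℝ) - x i))⁻¹ := (inv_pos.2 (Real.cosh_pos _)).le
  nlinarith

lemma sech_two (y h : ℝ) : (Real.cosh (y+h))⁻¹ + (Real.cosh (y-h))⁻¹ ≤ 2 * Real.cosh h * (Real.cosh y)⁻¹ ∧
   2 * (Real.cosh h)⁻¹ * (Real.cosh y)⁻¹ ≤ (Real.cosh (y+h))⁻¹ + (Real.cosh (y-h))⁻¹ := by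
  have p1 := Real.cosh_pos (y+h)
  have p2 := Real.cosh_pos (y-h)
  have p3 := Real.cosh_pos y
  have p4 := Real.cosh_pos h
  have q3 := Real.cosh_sq y
  have q4 := Real.cosh_sq h
  have e1 : Real.cosh (y+h) * Real.cosh (y-h) = Real.cosh y ^ 2 + Real.sinh h ^ 2 := by
    rw [Real.cosh_add, Real.cosh_sub]; linear_combination Real.cosh y ^ 2 * q4 + Real.sinh h ^2 * q3
  have e2 : (Real.cosh (y+h))⁻¹ + (Real.cosh (y-h))⁻¹ = 2 * Real.cosh y * Real.cosh h / (Real.cosh y ^ 2 + Real.sinh h ^ 2) := by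
    rw [← e1]; field_simp; rw [Real.cosh_add, Real.cosh_sub]; ring
  rw [e2, ← div_eq_mul_inv, ← div_eq_mul_inv, ← div_eq_mul_inv]
  have p5 : 0 < Real.cosh y ^ 2 + Real.sinh h ^ 2 := by positivity
  constructor
  · rw [div_le_div_iff₀ p5 p3]
    have : 0 ≤ Real.cosh h * Real.sinh h ^ 2 := by positivity
    nlinarith
  · rw [div_div, div_le_div_iff₀ (by positivity) p5]
    have : 0 ≤ Real.sinh y ^ 2 * Real.sinh h ^ 2 := by positivity
    nlinarith

lemma phi_two (d : ℕ) (h : ℝ) (x : Fin d → ℝ) (k : Fin d → ℤ) (j : Fin d) :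
   phi d h x (k + latE d j) + phi d h x (k - latE d j) ≤ 2 * Real.cosh h * phi d h x k ∧
   2 * (Real.cosh h)⁻¹ * phi d h x k ≤ phi d h x (k + latE d j) + phi d h x (k - latE d j) := by
  classical
  unfold phi
  rw [← Finset.mul_prod_erase _ _ (Finset.mem_univ j), ← Finset.mul_prod_erase _ _ (Finset.mem_univ j),
    ← Finset.mul_prod_erase Finset.univ (fun i => (Real.cosh (h * (k i : ℝ) - x i))⁻¹) (Finset.mem_univ j)]
  have c1 : ∏ i ∈ Finset.univ.erase j, (Real.cosh (h * (((k + latE d j) i : ℤ) : ℝ) - x i))⁻¹ =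
      ∏ i ∈ Finset.univ.erase j, (Real.cosh (h * (k i : ℝ) - x i))⁻¹ := by
    refine Finset.prod_congr rfl fun i hi => ?_
    simp [latE, Finset.ne_of_mem_erase hi]
  have c2 : ∏ i ∈ Finset.univ.erase j, (Real.cosh (h * (((k - latE d j) i : ℤ) : ℝ) - x i))⁻¹ =
      ∏ i ∈ Finset.univ.erase j, (Real.cosh (h * (k i : ℝ) - x i))⁻¹ := by
    refine Finset.prod_congr rfl fun i hi => ?_
    simp [latE, Finset.ne_of_mem_erase hi]
  rw [c1, c2]
  have hp : 0 ≤ ∏ i ∈ Finset.univ.erase j, (Real.cosh (h * (k i : ℝ) - x i))⁻¹ :=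
    Finset.prod_nonneg fun i _ => (inv_pos.2 (Real.cosh_pos _)).le
  obtain ⟨s1, s2⟩ := sech_two (h * (k j : ℝ) - x j) h
  have d1 : h * (((k + latE d j) j : ℤ) : ℝ) - x j = h * (k j : ℝ) - x j + h := by
    simp [latE]; ring
  have d2 : h * (((k - latE d j) j : ℤ) : ℝ) - x j = h * (k j : ℝ) - x j - h := by
    simp [latE]; ring
  rw [d1, d2]
  constructor <;> nlinarith
lemma hadd {d : ℕ} (u v : Hsp d) (k : Fin d → ℤ) : (u + v : Hsp d) k = u k + v k := rfl
lemma hsub {d : ℕ} (u v : Hsp d) (k : Fin d → ℤ) : (u - v : Hsp d) k = u k - v k := rfl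
lemma hneg {d : ℕ} (u : Hsp d) (k : Fin d → ℤ) : (-u : Hsp d) k = -u k := rfl
lemma hsmul {d : ℕ} (c : ℂ) (u : Hsp d) (k : Fin d → ℤ) : (c • u : Hsp d) k = c * u k := rfl

lemma memlp_two_iff {d : ℕ} (f : (Fin d → ℤ) → ℂ) :
    Memℓp (E := fun _ : (Fin d → ℤ) => ℂ) f 2 ↔ Summable (fun k => ‖f k‖ ^ 2) := by
  rw [memℓp_gen_iff (by norm_num)]
  norm_num

lemma hsp_norm_sq {d : ℕ} (w : Hsp d) : ‖w‖ ^ 2 = ∑' k, ‖w k‖ ^ 2 := by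
  have := lp.norm_rpow_eq_tsum (p := 2) (by norm_num) w
  norm_num at this
  exact this

lemma hsp_summable {d : ℕ} (w : Hsp d) : Summable (fun k => ‖w k‖ ^ 2) :=
  (memlp_two_iff _).1 (lp.memℓp w)

lemma exists_wcomp {d : ℕ} (m : (Fin d → ℤ) → ℂ) (M : ℝ) (hM : ∀ k, ‖m k‖ ≤ M)
    (σ : (Fin d → ℤ) ≃ (Fin d → ℤ)) :
    ∃ W : Hsp d →L[ℂ] Hsp d, ∀ (w : Hsp d) (k : Fin d → ℤ), (W w) k = m k * w (σ k) := by
  have hM0 : 0 ≤ M := le_trans (norm_nonneg _) (hM 0)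
  have hb : ∀ (w : Hsp d) k, ‖m k * w (σ k)‖ ^ 2 ≤ M ^ 2 * ‖w (σ k)‖ ^ 2 := by
    intro w k
    rw [norm_mul, mul_pow]
    gcongr
    exact hM k
  have hs : ∀ w : Hsp d, Summable (fun k => M ^ 2 * ‖w (σ k)‖ ^ 2) := fun w =>
    ((σ.summable_iff (f := fun k => ‖w k‖ ^ 2)).2 (hsp_summable w)).mul_left _
  have hmem : ∀ w : Hsp d, Memℓp (E := fun _ : (Fin d → ℤ) => ℂ) (fun k => m k * w (σ k)) 2 := by
    intro w
    rw [memlp_two_iff]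
    exact Summable.of_nonneg_of_le (fun _ => by positivity) (hb w) (hs w)
  let L : Hsp d →ₗ[ℂ] Hsp d :=
    { toFun := fun w => ⟨fun k => m k * w (σ k), hmem w⟩
      map_add' := by
        intro u v; ext k; exact mul_add _ _ _
      map_smul' := by
        intro c u; ext k; exact mul_left_comm _ _ _ }
  refine ⟨L.mkContinuous M ?_, fun w k => rfl⟩
  intro w
  refine abs_le_of_sq_le_sq' ?_ (by positivity) |>.2
  rw [hsp_norm_sq, mul_pow, hsp_norm_sq, ← σ.tsum_eq (fun k => ‖w k‖ ^ 2), ← tsum_mul_left]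
  exact Summable.tsum_le_tsum (hb w) (hsp_summable (L w)) (hs w)

lemma exists_Ph (d : ℕ) (h : ℝ) (V : (Fin d → ℝ) → ℝ) (M : ℝ) (hM : ∀ x, |V x| ≤ M) :
    ∃ P : Hsp d →L[ℂ] Hsp d, RealizesPh d h V P := by
  obtain ⟨W, hW⟩ := exists_wcomp (fun k => (V (pt d h k) : ℂ)) M
    (fun k => by simpa using hM (pt d h k)) (Equiv.refl _)
  choose Sp hSp using fun j => exists_wcomp (d := d) (fun k => 1) 1 (fun k => by simp) (Equiv.addRight (latE d j))
  choose Sm hSm using fun j => exists_wcomp (d := d) (fun k => 1) 1 (fun k => by simp) (Equiv.subRight (latE d j))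
  refine ⟨-(∑ j, (((h : ℂ)^2)⁻¹) • (Sp j + Sm j - (2 : ℂ) • (1 : Hsp d →L[ℂ] Hsp d))) + W, ?_⟩
  intro w k
  have key : ∀ s : Finset (Fin d), ((∑ j ∈ s, (((h : ℂ)^2)⁻¹) • (Sp j + Sm j - (2 : ℂ) • (1 : Hsp d →L[ℂ] Hsp d))) w) k
      = ∑ j ∈ s, (w (k + latE d j) + w (k - latE d j) - 2 * w k) / ((h : ℂ)) ^ 2 := by
    intro s
    classical
    induction s using Finset.induction_on with
    | empty => simp
    | insert a s ha ih =>
      rw [Finset.sum_insert ha, Finset.sum_insert ha, ← ih]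
      rw [add_apply, hadd, smul_apply, hsmul, sub_apply, hsub, add_apply, hadd, hSp, hSm, smul_apply, hsmul]
      simp [div_eq_inv_mul]
  rw [add_apply, hadd, neg_apply, hneg, key, hW]
  rfl
open scoped ComplexOrder in
lemma pos_exp {d : ℕ} (A : Hsp d →L[ℂ] Hsp d)
    (hA : ∀ w : Hsp d, (∀ k, 0 ≤ w k) → ∀ k, 0 ≤ (A w) k)
    (f : Hsp d) (hf : ∀ k, 0 ≤ f k) (lam mu t : ℝ) (hlam : 0 ≤ lam) (hmu : 0 ≤ mu) (ht : 0 ≤ t)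
    (h1 : ∀ k, (A f) k ≤ (lam : ℂ) * f k) (h2 : ∀ k, (mu : ℂ) * f k ≤ (A f) k) (k : Fin d → ℤ) :
    (NormedSpace.exp ((t : ℂ) • A) f) k ≤ (Real.exp (t * lam) : ℂ) * f k ∧
    (Real.exp (t * mu) : ℂ) * f k ≤ (NormedSpace.exp ((t : ℂ) • A) f) k := by
  have hlam' : (0:ℂ) ≤ (lam : ℂ) := by exact_mod_cast hlam
  have hmu' : (0:ℂ) ≤ (mu : ℂ) := by exact_mod_cast hmu
  have ht' : (0:ℂ) ≤ (t : ℂ) := by exact_mod_cast ht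
  have i1 : ∀ n : ℕ, ∀ k, 0 ≤ (((lam : ℂ) ^ n) • f - (A ^ n) f) k := by
    intro n
    induction n with
    | zero => intro k; simp
    | succ n ih =>
      intro k
      have e : (((lam : ℂ) ^ (n+1)) • f - (A ^ (n+1)) f) =
        ((lam : ℂ) ^ n) • ((lam : ℂ) • f - A f) + A (((lam : ℂ) ^ n) • f - (A ^ n) f) := by
        rw [pow_succ' A, mul_apply_eq_comp, map_sub, map_smul, smul_sub, smul_smul, pow_succ]
        abel
      rw [e, hadd, hsmul, hsub, hsmul]
      have := hA _ ih k
      have h3 : 0 ≤ (lam : ℂ) * f k - (A f) k := sub_nonneg.2 (h1 k)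
      exact add_nonneg (mul_nonneg (pow_nonneg hlam' n) h3) this
  have i2 : ∀ n : ℕ, ∀ k, 0 ≤ ((A ^ n) f - ((mu : ℂ) ^ n) • f) k := by
    intro n
    induction n with
    | zero => intro k; simp
    | succ n ih =>
      intro k
      have e : ((A ^ (n+1)) f - ((mu : ℂ) ^ (n+1)) • f) =
        ((mu : ℂ) ^ n) • (A f - (mu : ℂ) • f) + A ((A ^ n) f - ((mu : ℂ) ^ n) • f) := by
        rw [pow_succ' A, mul_apply_eq_comp, map_sub, map_smul, smul_sub, smul_smul, pow_succ]
        abel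
      rw [e, hadd, hsmul, hsub, hsmul]
      have := hA _ ih k
      have h3 : 0 ≤ (A f) k - (mu : ℂ) * f k := sub_nonneg.2 (h2 k)
      exact add_nonneg (mul_nonneg (pow_nonneg hmu' n) h3) this
  have hs : HasSum (fun n : ℕ => ((n.factorial : ℂ)⁻¹ * (t : ℂ) ^ n) * ((A ^ n) f) k)
      ((NormedSpace.exp ((t : ℂ) • A) f) k) := by
    have a1 := NormedSpace.exp_series_hasSum_exp' (𝕂 := ℂ) ((t : ℂ) • A)
    have a2 := (a1.mapL (ContinuousLinearMap.apply ℂ (Hsp d) f)).mapL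
      (lp.evalCLM ℂ (fun _ : (Fin d → ℤ) => ℂ) (p := 2) k)
    have e : ∀ n : ℕ, ((n.factorial : ℂ)⁻¹ * (t : ℂ) ^ n) * ((A ^ n) f) k =
        (((n.factorial : ℂ)⁻¹ • ((t : ℂ) • A) ^ n) f) k := by
      intro n
      rw [smul_pow, smul_smul, smul_apply, hsmul]
    simp_rw [e]
    exact a2
  have hr : ∀ r : ℝ, HasSum (fun n : ℕ => ((n.factorial : ℂ)⁻¹ * (t : ℂ) ^ n) * ((r : ℂ) ^ n * f k))
      ((Real.exp (t * r) : ℂ) * f k) := by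
    intro r
    have a1 := NormedSpace.exp_series_hasSum_exp' (𝕂 := ℂ) (((t * r : ℝ)) : ℂ)
    rw [← Complex.exp_eq_exp_ℂ, ← Complex.ofReal_exp] at a1
    have e : ∀ n : ℕ, ((n.factorial : ℂ)⁻¹ * (t : ℂ) ^ n) * ((r : ℂ) ^ n * f k) =
        ((n.factorial : ℂ)⁻¹ • (((t * r : ℝ)) : ℂ) ^ n) * f k := by
      intro n
      rw [smul_eq_mul]
      push_cast
      ring
    simp_rw [e]
    exact a1.mul_right (f k)
  have hc : ∀ n : ℕ, (0:ℂ) ≤ ((n.factorial : ℂ)⁻¹ * (t : ℂ) ^ n) := by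
    intro n
    refine mul_nonneg ?_ (pow_nonneg ht' n)
    have : (0:ℝ) ≤ (n.factorial : ℝ)⁻¹ := by positivity
    rw [show ((n.factorial : ℂ)⁻¹) = (((n.factorial : ℝ)⁻¹ : ℝ) : ℂ) by push_cast; rfl]
    exact Complex.zero_le_real.2 this
  constructor
  · refine hasSum_le (fun n => mul_le_mul_of_nonneg_left ?_ (hc n)) hs (hr lam)
    have := i1 n k
    rw [hsub, hsmul, sub_nonneg] at this
    exact this
  · refine hasSum_le (fun n => mul_le_mul_of_nonneg_left ?_ (hc n)) (hr mu) hs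
    have := i2 n k
    rw [hsub, hsmul, sub_nonneg] at this
    exact this

lemma exp_shift {d : ℕ} (P A : Hsp d →L[ℂ] Hsp d) (c t : ℝ)
    (hA : A = (c : ℂ) • (1 : Hsp d →L[ℂ] Hsp d) - P) :
    NormedSpace.exp ((-(t:ℂ)) • P) = (Real.exp (-(t*c)) : ℂ) • NormedSpace.exp ((t : ℂ) • A) := by
  have e : (-(t:ℂ)) • P = algebraMap ℂ (Hsp d →L[ℂ] Hsp d) ((-(t*c) : ℝ) : ℂ) + (t:ℂ) • A := by
    rw [hA, Algebra.algebraMap_eq_smul_one, smul_sub, smul_smul]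
    push_cast
    module
  letI : NormedAlgebra ℚ (Hsp d →L[ℂ] Hsp d) := NormedAlgebra.restrictScalars ℚ ℂ _
  rw [e, NormedSpace.exp_add_of_commute (Algebra.commutes _ _), ← NormedSpace.algebraMap_exp_comm,
    ← Complex.exp_eq_exp_ℂ, ← Complex.ofReal_exp, ← Algebra.smul_def]
lemma exists_phiH (d : ℕ) (h : ℝ) (h0 : 0 < h) (h1 : h ≤ 1) (x : Fin d → ℝ) :
    ∃ f : Hsp d, ∀ k, f k = (phi d h x k : ℂ) := by
  refine ⟨⟨fun k => (phi d h x k : ℂ), ?_⟩, fun k => rfl⟩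
  refine (memlp_two_iff _).2 ?_
  simpa using phi_sq_summable d h h0 h1 x

lemma A_apply (d : ℕ) (h : ℝ) (V : (Fin d → ℝ) → ℝ) (M : ℝ) (P : Hsp d →L[ℂ] Hsp d)
    (hP : RealizesPh d h V P) (w : Hsp d) (k : Fin d → ℤ) :
    ((((2 * d / h ^ 2 + M : ℝ) : ℂ) • (1 : Hsp d →L[ℂ] Hsp d) - P) w) k =
      ∑ j : Fin d, (((h^2)⁻¹ : ℝ) : ℂ) * (w (k + latE d j) + w (k - latE d j))
        + ((M - V (pt d h k) : ℝ) : ℂ) * w k := by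
  rw [sub_apply, hsub, smul_apply, hsmul, hP, discLap]
  have : ∑ j : Fin d, (w (k + latE d j) + w (k - latE d j) - 2 * w k) / (h : ℂ) ^ 2 =
      ∑ j : Fin d, (((h^2)⁻¹ : ℝ) : ℂ) * (w (k + latE d j) + w (k - latE d j))
        - ((2 * d / h ^ 2 : ℝ) : ℂ) * w k := by
    have e : ((2 * d / h ^ 2 : ℝ) : ℂ) * w k = ∑ j : Fin d, (((h^2)⁻¹ : ℝ) : ℂ) * (2 * w k) := by
      simp; ring
    rw [e, ← Finset.sum_sub_distrib]
    refine Finset.sum_congr rfl fun j _ => ?_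
    push_cast
    ring
  rw [this, one_apply_eq_self]
  push_cast
  ring

lemma cosh_sub_one_le (h : ℝ) (h0 : 0 < h) (h1 : h ≤ 1) : Real.cosh h - 1 ≤ h ^ 2 := by
  have a := Real.cosh_le_exp_half_sq h
  have b := Real.abs_exp_sub_one_sub_id_le (x := h^2/2) (by rw [abs_of_nonneg (by positivity)]; nlinarith)
  have := (abs_le.1 b).2
  have e : (h ^ 2 / 2) ^ 2 ≤ h ^ 2 / 2 := by
    have : h ^ 2 ≤ 1 := by nlinarith
    nlinarith [sq_nonneg h]
  linarith

open scoped ComplexOrder in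
lemma u_bounds (d : ℕ) (h : ℝ) (h0 : 0 < h) (h1 : h ≤ 1) (x : Fin d → ℝ)
    (V : (Fin d → ℝ) → ℝ) (M : ℝ) (hM : ∀ x, |V x| ≤ M) (P : Hsp d →L[ℂ] Hsp d)
    (hP : RealizesPh d h V P) (f : Hsp d) (hf : ∀ k, f k = (phi d h x k : ℂ))
    (t : ℝ) (ht : 0 ≤ t) (k : Fin d → ℤ) :
    ‖(NormedSpace.exp ((-(t:ℂ)) • P) f) k‖ ≤ Real.exp (t * (2 * d + M)) * phi d h x k ∧
    Real.exp (-(t * (2 * d + M))) * phi d h x k ≤ ‖(NormedSpace.exp ((-(t:ℂ)) • P) f) k‖ := by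
  have hM0 : 0 ≤ M := le_trans (abs_nonneg _) (hM 0)
  have pc := Real.cosh_pos h
  set c : ℝ := 2 * d / h ^ 2 + M with hc
  set A := ((c : ℂ) • (1 : Hsp d →L[ℂ] Hsp d) - P) with hA
  have hAa := A_apply d h V M P hP
  have hVM : ∀ y, 0 ≤ M - V y := fun y => by linarith [(abs_le.1 (hM y)).2]
  have hVM2 : ∀ y, M - V y ≤ 2 * M := fun y => by linarith [(abs_le.1 (hM y)).1]
  have hpos : ∀ w : Hsp d, (∀ k, 0 ≤ w k) → ∀ k, 0 ≤ (A w) k := by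
    intro w hw k
    rw [hA, hAa]
    refine add_nonneg (Finset.sum_nonneg fun j _ => mul_nonneg ?_ (add_nonneg (hw _) (hw _)))
      (mul_nonneg ?_ (hw _))
    · exact Complex.zero_le_real.2 (by positivity)
    · exact Complex.zero_le_real.2 (hVM _)
  have hAf : ∀ k, (A f) k = ((∑ j : Fin d, (h^2)⁻¹ * (phi d h x (k + latE d j) + phi d h x (k - latE d j))
        + (M - V (pt d h k)) * phi d h x k : ℝ) : ℂ) := by
    intro k
    rw [hA, hAa]
    simp only [hf]
    push_cast
    rfl
  obtain ⟨b1, b2⟩ := pos_exp A hpos f (fun k => by rw [hf]; exact Complex.zero_le_real.2 (phi_pos _ _ _ _).le)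
    (2 * d * Real.cosh h / h ^ 2 + 2 * M) (2 * d * (Real.cosh h)⁻¹ / h ^ 2) t (by positivity) (by positivity) ht
    (by
      intro k
      rw [hAf, hf, ← Complex.ofReal_mul, Complex.real_le_real]
      have : ∑ j : Fin d, (h^2)⁻¹ * (phi d h x (k + latE d j) + phi d h x (k - latE d j)) ≤
         ∑ j : Fin d, (h^2)⁻¹ * (2 * Real.cosh h * phi d h x k) :=
        Finset.sum_le_sum fun j _ => mul_le_mul_of_nonneg_left (phi_two d h x k j).1 (by positivity)
      rw [Finset.sum_const, Finset.card_univ, Fintype.card_fin, nsmul_eq_mul] at this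
      have h3 := mul_le_mul_of_nonneg_right (hVM2 (pt d h k)) (phi_pos d h x k).le
      calc _ ≤ _ := add_le_add this h3
        _ = _ := by ring)
    (by
      intro k
      rw [hAf, hf, ← Complex.ofReal_mul, Complex.real_le_real]
      have : ∑ j : Fin d, (h^2)⁻¹ * (2 * (Real.cosh h)⁻¹ * phi d h x k) ≤
         ∑ j : Fin d, (h^2)⁻¹ * (phi d h x (k + latE d j) + phi d h x (k - latE d j)) :=
        Finset.sum_le_sum fun j _ => mul_le_mul_of_nonneg_left (phi_two d h x k j).2 (by positivity)
      rw [Finset.sum_const, Finset.card_univ, Fintype.card_fin, nsmul_eq_mul] at this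
      have h3 := mul_nonneg (hVM (pt d h k)) (phi_pos d h x k).le
      calc _ = _ := by ring
        _ ≤ _ := add_le_add this h3) k
  rw [exp_shift P A c t hA, smul_apply, hsmul, norm_mul, Complex.norm_real, Real.norm_eq_abs,
    abs_of_pos (Real.exp_pos _)]
  rw [hf, ← Complex.ofReal_mul] at b1 b2
  obtain ⟨r, hr⟩ : ∃ r : ℝ, (NormedSpace.exp ((t : ℂ) • A) f) k = (r : ℂ) := by
    refine ⟨((NormedSpace.exp ((t : ℂ) • A) f) k).re, ?_⟩
    have := (Complex.le_def.1 b1).2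
    apply Complex.ext
    · rw [Complex.ofReal_re]
    · rw [this, Complex.ofReal_im, Complex.ofReal_im]
  rw [hr] at b1 b2 ⊢
  rw [Complex.real_le_real] at b1 b2
  have r0 : 0 ≤ r := le_trans (mul_nonneg (Real.exp_pos _).le (phi_pos _ _ _ _).le) b2
  rw [Complex.norm_real, Real.norm_eq_abs, abs_of_nonneg r0]
  have hcs := cosh_sub_one_le h h0 h1
  have q1 : 2 * d * Real.cosh h / h ^ 2 + 2 * M - c ≤ 2 * d + M := by
    have : 2 * (d:ℝ) * (Real.cosh h - 1) / h ^ 2 ≤ 2 * d := by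
      rw [div_le_iff₀ (by positivity)]
      exact mul_le_mul_of_nonneg_left hcs (by positivity)
    have e : 2 * d * Real.cosh h / h ^ 2 + 2 * M - c = 2 * (d:ℝ) * (Real.cosh h - 1) / h ^ 2 + M := by
      rw [hc]; ring
    linarith
  have q2 : c - 2 * d * (Real.cosh h)⁻¹ / h ^ 2 ≤ 2 * d + M := by
    have h5 : 1 - (Real.cosh h)⁻¹ ≤ Real.cosh h - 1 := by
      have : Real.cosh h * (Real.cosh h)⁻¹ = 1 := mul_inv_cancel₀ pc.ne'
      nlinarith [sq_nonneg (Real.cosh h - 1), inv_pos.2 pc]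
    have : 2 * (d:ℝ) * (1 - (Real.cosh h)⁻¹) / h ^ 2 ≤ 2 * d := by
      rw [div_le_iff₀ (by positivity)]
      exact mul_le_mul_of_nonneg_left (h5.trans hcs) (by positivity)
    have e : c - 2 * d * (Real.cosh h)⁻¹ / h ^ 2 = 2 * (d:ℝ) * (1 - (Real.cosh h)⁻¹) / h ^ 2 + M := by
      rw [hc]; ring
    linarith
  have hp := phi_pos d h x k
  constructor
  · calc _ ≤ Real.exp (-(t*c)) * (Real.exp (t * (2 * d * Real.cosh h / h ^ 2 + 2 * M)) * phi d h x k) :=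
        mul_le_mul_of_nonneg_left b1 (Real.exp_pos _).le
      _ = Real.exp (t * (2 * d * Real.cosh h / h ^ 2 + 2 * M - c)) * phi d h x k := by
        rw [← mul_assoc, ← Real.exp_add]; ring_nf
      _ ≤ _ := mul_le_mul_of_nonneg_right (Real.exp_le_exp.2 (mul_le_mul_of_nonneg_left q1 ht)) hp.le
  · calc _ ≤ Real.exp (-(t * (c - 2 * d * (Real.cosh h)⁻¹ / h ^ 2))) * phi d h x k :=
        mul_le_mul_of_nonneg_right (Real.exp_le_exp.2 (neg_le_neg (mul_le_mul_of_nonneg_left q2 ht))) hp.le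
      _ = Real.exp (-(t*c)) * (Real.exp (t * (2 * d * (Real.cosh h)⁻¹ / h ^ 2)) * phi d h x k) := by
        rw [← mul_assoc, ← Real.exp_add]; ring_nf
      _ ≤ _ := mul_le_mul_of_nonneg_left b2 (Real.exp_pos _).le

lemma phi_omega (d : ℕ) (h : ℝ) (h0 : 0 < h) (h1 : h ≤ 1) (x : Fin d → ℝ) (ω : Set (Fin d → ℝ))
    (L : ℝ) (hL : 0 < L) :
    Summable (fun k => Set.indicator ω (fun _ => phi d h x k ^ 2) (pt d h k)) ∧
    ∑' k, Set.indicator ω (fun _ => phi d h x k ^ 2) (pt d h k) ≤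
      (Nat.card {k : Fin d → ℤ // pt d h k ∈ ω ∩ Qcube d L x} : ℝ)
        + (Real.cosh (L/2))⁻¹ * ∑' k, phi d h x k := by
  classical
  let S : Set (Fin d → ℤ) := {k | pt d h k ∈ ω ∩ Qcube d L x}
  have hS : S.Finite := by
    refine (Set.finite_Icc (fun i => ⌈(x i - L/2)/h⌉) (fun i => ⌊(x i + L/2)/h⌋)).subset ?_
    intro k hk
    have hk2 : ∀ i, |h * (k i : ℝ) - x i| ≤ L / 2 := hk.2
    refine ⟨fun i => ?_, fun i => ?_⟩
    · show ⌈(x i - L/2)/h⌉ ≤ k i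
      rw [Int.ceil_le, div_le_iff₀ h0]
      linarith [(abs_le.1 (hk2 i)).1]
    · show k i ≤ ⌊(x i + L/2)/h⌋
      rw [Int.le_floor, le_div_iff₀ h0]
      linarith [(abs_le.1 (hk2 i)).2]
  have hsum : Summable (fun k => Set.indicator ω (fun _ => phi d h x k ^ 2) (pt d h k)) := by
    refine Summable.of_nonneg_of_le (fun k => Set.indicator_nonneg (fun _ _ => by positivity) _)
      (fun k => ?_) (phi_sq_summable d h h0 h1 x)
    exact Set.indicator_le_self' (f := fun _ => phi d h x k ^ 2) (fun _ _ => by positivity) _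
  refine ⟨hsum, ?_⟩
  have hS1 : HasSum (S.indicator (fun _ => (1:ℝ))) (Nat.card S : ℝ) := by
    have : HasSum (S.indicator (fun _ => (1:ℝ))) (∑ b ∈ hS.toFinset, S.indicator (fun _ => (1:ℝ)) b) := hasSum_sum_of_ne_finset_zero
      (fun b hb => by simp only [Set.Finite.mem_toFinset] at hb; simp [hb])
    convert this using 1
    rw [Finset.sum_congr rfl (g := fun _ => (1:ℝ)) (fun k hk => by
      simp only [Set.Finite.mem_toFinset] at hk; simp [hk])]
    simp [Nat.card_coe_set_eq, Set.ncard_eq_toFinset_card S hS]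
  have hR := hS1.add ((phi_summable d h h0 h1 x).hasSum.mul_left ((Real.cosh (L/2))⁻¹))
  refine hasSum_le (fun k => ?_) hsum.hasSum hR
  have hp := phi_pos d h x k
  have hp1 := phi_le_one d h x k
  have hcp : 0 < (Real.cosh (L/2))⁻¹ := inv_pos.2 (Real.cosh_pos _)
  by_cases hk : pt d h k ∈ ω
  · rw [Set.indicator_of_mem hk]
    by_cases hq : pt d h k ∈ Qcube d L x
    · have : k ∈ S := ⟨hk, hq⟩
      rw [Set.indicator_of_mem this]
      nlinarith [mul_pos hcp hp]
    · have : k ∉ S := fun hh => hq hh.2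
      rw [Set.indicator_of_notMem this]
      simp only [Qcube, Set.mem_ofPred_eq, not_forall, not_le] at hq
      obtain ⟨i, hi⟩ := hq
      have := phi_far d h x k L hL i hi
      nlinarith
  · rw [Set.indicator_of_notMem hk]
    have : 0 ≤ S.indicator (fun _ => (1:ℝ)) k := Set.indicator_nonneg (fun _ _ => zero_le_one) _
    nlinarith [mul_pos hcp hp]

lemma main_ineq (d : ℕ) (ω : Set (Fin d → ℝ)) (V : (Fin d → ℝ) → ℝ) (M : ℝ) (hM : ∀ x, |V x| ≤ M)
    (T h₀ C : ℝ) (hT : 0 < T) (hC : 0 < C)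
    (hobs : ∀ h : ℝ, 0 < h → h ≤ h₀ →
      ∀ P : Hsp d →L[ℂ] Hsp d, RealizesPh d h V P →
      ∀ u₀ : Hsp d,
        ‖NormedSpace.exp ((-(T:ℂ)) • P) u₀‖ ^ 2
          ≤ C * (∫ t in Set.Ioc (0:ℝ) T,
                sqNormOn d h ω (NormedSpace.exp ((-(t:ℂ)) • P) u₀))
            + C * Real.exp (-C / h ^ 2) * ‖u₀‖ ^ 2)
    (h : ℝ) (h0 : 0 < h) (h1 : h ≤ 1) (hh : h ≤ h₀) (x : Fin d → ℝ) (L : ℝ) (hL : 0 < L) :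
    Real.exp (-(T * (2 * d + M))) ^ 2 * (((Real.cosh 1)⁻¹) ^ d) ^ 2 ≤
      C * (Real.exp (T * (2 * d + M)) ^ 2 * T) *
        (h ^ d * (Nat.card {k : Fin d → ℤ // pt d h k ∈ ω ∩ Qcube d L x} : ℝ)
          + (Real.cosh (L/2))⁻¹ * 8 ^ d)
        + C * Real.exp (-C / h ^ 2) * 8 ^ d := by
  have hM0 : 0 ≤ M := le_trans (abs_nonneg _) (hM 0)
  obtain ⟨P, hP⟩ := exists_Ph d h V M hM
  obtain ⟨f, hf⟩ := exists_phiH d h h0 h1 x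
  have hb := u_bounds d h h0 h1 x V M hM P hP f hf
  have ho := hobs h h0 hh P hP f
  obtain ⟨hs1, hs2⟩ := phi_omega d h h0 h1 x ω L hL
  have hsq := phi_sq_summable d h h0 h1 x
  set K := 2 * (d:ℝ) + M with hK
  have hK0 : 0 ≤ K := by positivity
  have hfn : ‖f‖ ^ 2 = ∑' k, phi d h x k ^ 2 := by
    rw [hsp_norm_sq]
    simp [hf]
  have hlow : Real.exp (-(T * K)) ^ 2 * ∑' k, phi d h x k ^ 2 ≤ ‖NormedSpace.exp ((-(T:ℂ)) • P) f‖ ^ 2 := by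
    rw [hsp_norm_sq, ← tsum_mul_left]
    refine Summable.tsum_le_tsum (fun k => ?_) (hsq.mul_left _) (hsp_summable _)
    rw [← mul_pow]
    exact pow_le_pow_left₀ (mul_nonneg (Real.exp_pos _).le (phi_pos _ _ _ _).le) (hb T hT.le k).2 2
  have hint : (∫ t in Set.Ioc (0:ℝ) T, sqNormOn d h ω (NormedSpace.exp ((-(t:ℂ)) • P) f)) ≤
      (Real.exp (T * K) ^ 2 * ∑' k, Set.indicator ω (fun _ => phi d h x k ^ 2) (pt d h k)) * T := by
    have hpt : ∀ t ∈ Set.Ioc (0:ℝ) T, ‖sqNormOn d h ω (NormedSpace.exp ((-(t:ℂ)) • P) f)‖ ≤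
        Real.exp (T * K) ^ 2 * ∑' k, Set.indicator ω (fun _ => phi d h x k ^ 2) (pt d h k) := by
      intro t ht
      have hle : ∀ k, Set.indicator ω (fun _ => ‖(NormedSpace.exp ((-(t:ℂ)) • P) f) k‖ ^ 2) (pt d h k) ≤
          Real.exp (T * K) ^ 2 * Set.indicator ω (fun _ => phi d h x k ^ 2) (pt d h k) := by
        intro k
        by_cases hk : pt d h k ∈ ω
        · rw [Set.indicator_of_mem hk, Set.indicator_of_mem hk, ← mul_pow]
          refine pow_le_pow_left₀ (norm_nonneg _) ((hb t ht.1.le k).1.trans ?_) 2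
          refine mul_le_mul_of_nonneg_right (Real.exp_le_exp.2 ?_) (phi_pos _ _ _ _).le
          exact mul_le_mul_of_nonneg_right ht.2 hK0
        · rw [Set.indicator_of_notMem hk, Set.indicator_of_notMem hk, mul_zero]
      have hnn : ∀ k, 0 ≤ Set.indicator ω (fun _ => ‖(NormedSpace.exp ((-(t:ℂ)) • P) f) k‖ ^ 2) (pt d h k) :=
        fun k => Set.indicator_nonneg (fun _ _ => by positivity) _
      rw [sqNormOn, Real.norm_eq_abs, abs_of_nonneg (tsum_nonneg hnn), ← tsum_mul_left]
      exact Summable.tsum_le_tsum hle (Summable.of_nonneg_of_le hnn hle (hs1.mul_left _)) (hs1.mul_left _)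
    have := norm_setIntegral_le_of_norm_le_const (μ := volume) (by simp) hpt
    refine (le_trans (le_abs_self _) this).trans (le_of_eq ?_)
    simp [hT.le]
  have hhd : 0 < h ^ d := by positivity
  have g1 := phi_tsum_ge d h h0 h1 x
  have g2 := phi_tsum_le d h h0 h1 x
  have g3 : h ^ d * ∑' k, phi d h x k ^ 2 ≤ 8 ^ d := by
    refine le_trans (mul_le_mul_of_nonneg_left ?_ hhd.le) g2
    refine Summable.tsum_le_tsum (fun k => ?_) hsq (phi_summable d h h0 h1 x)
    nlinarith [phi_pos d h x k, phi_le_one d h x k]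
  rw [hfn] at ho
  have hcp : 0 < (Real.cosh (L/2))⁻¹ := inv_pos.2 (Real.cosh_pos _)
  set Z := ∑' k, phi d h x k ^ 2
  set Y := ∑' k, phi d h x k
  set I := ∑' k, Set.indicator ω (fun _ => phi d h x k ^ 2) (pt d h k)
  set N := (Nat.card {k : Fin d → ℤ // pt d h k ∈ ω ∩ Qcube d L x} : ℝ)
  calc _ ≤ Real.exp (-(T * K)) ^ 2 * (h ^ d * Z) := mul_le_mul_of_nonneg_left g1 (by positivity)
    _ = h ^ d * (Real.exp (-(T * K)) ^ 2 * Z) := by ring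
    _ ≤ h ^ d * (C * ((Real.exp (T * K) ^ 2 * (N + (Real.cosh (L/2))⁻¹ * Y)) * T) + C * Real.exp (-C / h ^ 2) * Z) := by
        refine mul_le_mul_of_nonneg_left ((hlow.trans ho).trans ?_) hhd.le
        refine add_le_add_left (mul_le_mul_of_nonneg_left (hint.trans ?_) hC.le) _
        refine mul_le_mul_of_nonneg_right (mul_le_mul_of_nonneg_left hs2 (by positivity)) hT.le
    _ = C * (Real.exp (T * K) ^ 2 * T) * (h ^ d * N + (Real.cosh (L/2))⁻¹ * (h ^ d * Y)) + C * Real.exp (-C / h ^ 2) * (h ^ d * Z) := by ring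
    _ ≤ _ := by gcongr

/-- Thickness is necessary for uniform observability: if the semi-discrete heat
semigroup `e^{−tP_h}` satisfies the relaxed observability inequality on `ω` uniformly
for small `h`, then `ω` is thick. -/
theorem stmt_19 (d : ℕ) (ω : Set (Fin d → ℝ)) (hωopen : IsOpen ω)
    (hsample : ∀ Λ : ℝ, 0 < Λ → ∀ x₀ : Fin d → ℝ,
      Filter.Tendsto
        (fun h : ℝ => h ^ d * (Nat.card {k : Fin d → ℤ // pt d h k ∈ ω ∩ Qcube d Λ x₀} : ℝ))
        (nhdsWithin 0 (Set.Ioi 0))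
        (nhds (volume (ω ∩ Qcube d Λ x₀)).toReal))
    (V : (Fin d → ℝ) → ℝ) (hVcont : Continuous V)
    (hVbdd : BddAbove (Set.range fun x => |V x|))
    (T h₀ C : ℝ) (hT : 0 < T) (hh₀ : 0 < h₀) (hC : 0 < C)
    (hobs : ∀ h : ℝ, 0 < h → h ≤ h₀ →
      ∀ P : Hsp d →L[ℂ] Hsp d, RealizesPh d h V P →
      ∀ u₀ : Hsp d,
        ‖NormedSpace.exp ((-(T:ℂ)) • P) u₀‖ ^ 2
          ≤ C * (∫ t in Set.Ioc (0:ℝ) T,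
                sqNormOn d h ω (NormedSpace.exp ((-(t:ℂ)) • P) u₀))
            + C * Real.exp (-C / h ^ 2) * ‖u₀‖ ^ 2) :
    ∃ L > (0:ℝ), ∃ γ : ℝ, 0 < γ ∧ γ ≤ 1 ∧
      ∀ x : Fin d → ℝ,
        ENNReal.ofReal γ * volume (Qcube d L (fun _ => 0)) ≤ volume (ω ∩ Qcube d L x) := by
  obtain ⟨M, hM'⟩ := hVbdd
  have hM : ∀ x, |V x| ≤ M := fun x => hM' ⟨x, rfl⟩
  have hI := main_ineq d ω V M hM T h₀ C hT hC hobs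
  set c1 := Real.exp (-(T * (2 * d + M))) ^ 2 * (((Real.cosh 1)⁻¹) ^ d) ^ 2 with hc1
  set c2 := C * (Real.exp (T * (2 * d + M)) ^ 2 * T) with hc2
  have c1p : 0 < c1 := by
    have := inv_pos.2 (Real.cosh_pos 1)
    positivity
  have c2p : 0 < c2 := by positivity
  obtain ⟨L, hL, hLc⟩ : ∃ L > (0:ℝ), c2 * ((Real.cosh (L/2))⁻¹ * 8 ^ d) ≤ c1 / 2 := by
    refine ⟨2 * (2 * (c2 * 8 ^ d) / c1 + 1), by positivity, ?_⟩
    rw [mul_div_cancel_left₀ _ (two_ne_zero)]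
    set z := 2 * (c2 * 8 ^ d) / c1 + 1 with hz
    have zp : 0 < z := by positivity
    have hcz' : 2 * (c2 * 8 ^ d) / c1 ≤ Real.cosh z := by
      have h5 := Real.self_le_sinh_iff.2 zp.le
      have h6 := Real.sinh_lt_cosh z
      linarith
    have hcp := Real.cosh_pos z
    rw [div_le_iff₀ c1p] at hcz'
    rw [show c2 * ((Real.cosh z)⁻¹ * 8 ^ d) = (c2 * 8 ^ d) / Real.cosh z by ring,
      div_le_iff₀ hcp]
    linarith
  have hvol : ∀ x, c1 / 2 / c2 ≤ (volume (ω ∩ Qcube d L x)).toReal := by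
    intro x
    have hexp : Filter.Tendsto (fun h : ℝ => Real.exp (-C / h ^ 2)) (nhdsWithin 0 (Set.Ioi 0)) (nhds 0) := by
      refine Real.tendsto_exp_atBot.comp ?_
      have a1 : Filter.Tendsto (fun h : ℝ => h⁻¹ ^ 2) (nhdsWithin 0 (Set.Ioi 0)) Filter.atTop :=
        (Filter.tendsto_pow_atTop two_ne_zero).comp tendsto_inv_nhdsGT_zero
      have a2 := a1.const_mul_atTop_of_neg (r := -C) (by linarith)
      refine a2.congr fun h => ?_
      rw [inv_pow, div_eq_mul_inv]
    have hlim := (((hsample L hL x).add_const ((Real.cosh (L/2))⁻¹ * 8 ^ d)).const_mul c2).add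
      ((hexp.const_mul C).mul_const (8 ^ d))
    have hm : Set.Ioc (0:ℝ) (min 1 h₀) ∈ nhdsWithin (0:ℝ) (Set.Ioi 0) :=
      Ioc_mem_nhdsGT (lt_min one_pos hh₀)
    have := ge_of_tendsto hlim (Filter.mem_of_superset hm fun h hh =>
      hI h hh.1 (hh.2.trans (min_le_left _ _)) (hh.2.trans (min_le_right _ _)) x L hL)
    rw [div_le_iff₀ c2p]
    simp only [mul_zero, zero_mul, add_zero] at this
    linarith
  have hfin : ∀ x, volume (Qcube d L x) ≠ ⊤ := by
    intro x
    have : Qcube d L x ⊆ Metric.closedBall x (L/2) := by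
      intro y hy
      rw [Metric.mem_closedBall, dist_pi_le_iff (by positivity)]
      intro i
      rw [Real.dist_eq]
      exact hy i
    exact ((measure_mono this).trans_lt measure_closedBall_lt_top).ne
  set δ := c1 / 2 / c2 with hδ
  have δp : 0 < δ := by positivity
  set v := (volume (Qcube d L (fun _ => 0))).toReal with hv
  have v0 : 0 ≤ v := ENNReal.toReal_nonneg
  refine ⟨L, hL, δ / (v + δ), by positivity, ?_, fun x => ?_⟩
  · rw [div_le_one (by positivity)]; linarith
  · have hfx : volume (ω ∩ Qcube d L x) ≠ ⊤ :=
      ((measure_mono Set.inter_subset_right).trans_lt (hfin x).lt_top).ne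
    rw [← ENNReal.ofReal_toReal (hfin _), ← ENNReal.ofReal_mul (by positivity),
      ← ENNReal.ofReal_toReal hfx]
    refine ENNReal.ofReal_le_ofReal (le_trans ?_ (hvol x))
    rw [← hv, div_mul_eq_mul_div, div_le_iff₀ (by positivity)]
    nlinarith
end
end
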